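/- Let θ be a proper convex piecewise linear function on ℝ^m, let Φ : ℝ^n × ℝ^d → ℝ^m and φ₀ : ℝ^n × ℝ^d → ℝ be C²-smooth around (x̄,w̄) with z̄ := Φ(x̄,w̄) ∈ dom θ, let v̄ ∈ ∇_xφ₀(x̄,w̄) + ∇_xΦ(x̄,w̄)*∂θ(z̄), and assume the nondegeneracy condition S(z̄) ∩ ker ∇_xΦ(x̄,w̄)* = {0}, so that there is a unique λ̄ ∈ ∂θ(z̄) with v̄ = ∇_xφ₀(x̄,w̄) + ∇_xΦ(x̄,w̄)*λ̄. Then x̄ is a fully stable locally optimal solution of the problem P(w̄,v̄): minimize φ₀(x,w̄) + θ(Φ(x,w̄)) − ⟨v̄,x⟩, if and only if the composite strong second-order sufficient condition holds: ⟨u, ∇²_{xx}L(x̄,w̄,λ̄)u⟩ > 0 for every u ≠ 0 with ∇_xΦ(x̄,w̄)u ∈ dom ∂²θ(z̄,λ̄), where L(x,w,λ) := φ₀(x,w) + ⟨λ, Φ(x,w)⟩. -/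

import Mathlib

noncomputable section
open Set Filter Topology Metric
open scoped RealInnerProductSpace Pointwise NNReal Classical

/-- `Euc m` is the Euclidean space `ℝ^m`. -/
abbrev Euc (m : ℕ) := EuclideanSpace ℝ (Fin m)

variable {F G : Type*} [NormedAddCommGroup F] [InnerProductSpace ℝ F]
  [NormedAddCommGroup G] [InnerProductSpace ℝ G]

/-- The (convex) subdifferential of an extended-real-valued function:
`∂θ(z) = {v : θ(z') ≥ θ(z) + ⟨v, z' - z⟩ for all z'}`. -/
def subdiff (θ : F → EReal) (z : F) : Set F :=
  {v | ∀ z', θ z + ((⟪v, z' - z⟫ : ℝ) : EReal) ≤ θ z'}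

/-- The Fréchet (regular) normal cone to `Ω` at `x`:
vectors `v` with `limsup_{y → x, y ∈ Ω} ⟨v, y - x⟩ / ‖y - x‖ ≤ 0`. -/
def frechetNormal (Ω : Set F) (x : F) : Set F :=
  {v | Filter.limsup (fun y => ⟪v, y - x⟫ / ‖y - x‖) (𝓝[Ω] x) ≤ 0}

/-- The limiting (Mordukhovich) normal cone to `Ω` at `x`. -/
def limitingNormal (Ω : Set F) (x : F) : Set F :=
  {v | ∃ xs vs : ℕ → F, (∀ k, xs k ∈ Ω) ∧ Filter.Tendsto xs Filter.atTop (𝓝 x) ∧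
    Filter.Tendsto vs Filter.atTop (𝓝 v) ∧ ∀ k, vs k ∈ frechetNormal Ω (xs k)}

/-- Pairing into the `ℓ²`-product of two inner product spaces. -/
def pl2 (x : F) (y : G) : WithLp 2 (F × G) := (WithLp.equiv 2 (F × G)).symm (x, y)

/-- The second-order subdifferential (generalized Hessian)
`∂²θ(z,v)(u) = {w : (w,-u) ∈ N((z,v); gph ∂θ)}`. -/
def sosd (θ : F → EReal) (z v : F) (u : F) : Set F :=
  {w | pl2 w (-u) ∈ limitingNormal
    {q : WithLp 2 (F × F) | ((WithLp.equiv 2 (F × F)) q).2 ∈ subdiff θ ((WithLp.equiv 2 (F × F)) q).1}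
    (pl2 z v)}

/-- The polyhedral domain `{z : ⟨d i, z⟩ ≤ β i for all i}` of a CPWL function. -/
def cpwlDom {m p : ℕ} (d : Fin p → Euc m) (β : Fin p → ℝ) : Set (Euc m) :=
  {z | ∀ i, ⟪d i, z⟫ ≤ β i}

/-- The CPWL function determined by the data `(a, α, d, β)`:
`θ(z) = max_i (⟨a i, z⟩ - α i)` on its polyhedral domain and `+∞` outside. -/
def cpwlFun {m l p : ℕ} (a : Fin l → Euc m) (α : Fin l → ℝ) (d : Fin p → Euc m)
    (β : Fin p → ℝ) : Euc m → EReal :=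
  fun z => if z ∈ cpwlDom d β then (((⨆ i, (⟪a i, z⟫ - α i)) : ℝ) : EReal) else ⊤

/-- Active indices of the max expression at `z`. -/
def Kact {m l p : ℕ} (a : Fin l → Euc m) (α : Fin l → ℝ) (d : Fin p → Euc m) (β : Fin p → ℝ)
    (z : Euc m) : Set (Fin l) :=
  {i | cpwlFun a α d β z = ((⟪a i, z⟫ - α i : ℝ) : EReal)}

/-- Active indices of the domain inequalities at `z`. -/
def Iact {m p : ℕ} (d : Fin p → Euc m) (β : Fin p → ℝ) (z : Euc m) : Set (Fin p) :=
  {i | ⟪d i, z⟫ = β i}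

/-- Convex conic hull: all finite nonnegative combinations of elements of `s`. -/
def coneHull (s : Set F) : Set F :=
  {x | ∃ (n : ℕ) (c : Fin n → ℝ) (y : Fin n → F), (∀ i, 0 ≤ c i) ∧ (∀ i, y i ∈ s) ∧
    x = ∑ i, c i • y i}

/-- `Spar θ z` is the linear subspace parallel to the affine hull of `∂θ(z)`. -/
def Spar (θ : F → EReal) (z : F) : Submodule ℝ F := (affineSpan ℝ (subdiff θ z)).direction

/-- A convex polyhedron: a finite intersection of closed halfspaces. -/
def IsPolyhedron {V : Type*} [AddCommGroup V] [Module ℝ V] (C : Set V) : Prop :=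
  ∃ (N : ℕ) (f : Fin N → V →ₗ[ℝ] ℝ) (b : Fin N → ℝ), C = {x | ∀ i, f i x ≤ b i}

/-- A proper convex piecewise linear function with values in `ℝ ∪ {+∞}`:
its epigraph is a convex polyhedron, it never takes the value `-∞`, and it is
not identically `+∞`. -/
def IsCPWL {V : Type*} [AddCommGroup V] [Module ℝ V] (f : V → EReal) : Prop :=
  IsPolyhedron {xt : V × ℝ | f xt.1 ≤ (xt.2 : EReal)} ∧ (∀ x, f x ≠ ⊥) ∧ (∃ x, f x ≠ ⊤)

/-- Local argmin set `M_γ(w,v)` of `x ↦ φ(x,w) - ⟨v,x⟩` over the ball `‖x - xb‖ ≤ γ`,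
with the convention that minimizers at which the objective is `+∞` are discarded. -/
def argminLoc {n d : ℕ} (φ : Euc n → Euc d → EReal) (xb : Euc n) (γ : ℝ) (w : Euc d)
    (v : Euc n) : Set (Euc n) :=
  {x | ‖x - xb‖ ≤ γ ∧ φ x w ≠ ⊤ ∧
    ∀ y, ‖y - xb‖ ≤ γ → φ x w - ((⟪v, x⟫ : ℝ) : EReal) ≤ φ y w - ((⟪v, y⟫ : ℝ) : EReal)}

/-- Local optimal value `m_γ(w,v)` of `x ↦ φ(x,w) - ⟨v,x⟩` over the ball `‖x - xb‖ ≤ γ`. -/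
def infLoc {n d : ℕ} (φ : Euc n → Euc d → EReal) (xb : Euc n) (γ : ℝ) (w : Euc d)
    (v : Euc n) : EReal :=
  ⨅ x ∈ {x : Euc n | ‖x - xb‖ ≤ γ}, (φ x w - ((⟪v, x⟫ : ℝ) : EReal))

/-- `xb` is a fully stable locally optimal solution of
`minimize φ(x,wb) - ⟨vb,x⟩` : for some `γ > 0` and neighborhoods `W × V` of `(wb,vb)`,
the local argmin map is single-valued and Lipschitz with value `xb` at `(wb,vb)`, and the
local optimal value function is finite and Lipschitz. -/
def FullyStableSol {n d : ℕ} (φ : Euc n → Euc d → EReal) (xb : Euc n) (wb : Euc d)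
    (vb : Euc n) : Prop :=
  ∃ γ > (0 : ℝ), ∃ W ∈ 𝓝 wb, ∃ V ∈ 𝓝 vb,
    (∃ σ : Euc d × Euc n → Euc n,
      (∃ K : ℝ≥0, LipschitzOnWith K σ (W ×ˢ V)) ∧
      (∀ w ∈ W, ∀ v ∈ V, argminLoc φ xb γ w v = {σ (w, v)}) ∧ σ (wb, vb) = xb) ∧
    (∃ μ : Euc d × Euc n → ℝ,
      (∃ K : ℝ≥0, LipschitzOnWith K μ (W ×ˢ V)) ∧
      ∀ w ∈ W, ∀ v ∈ V, infLoc φ xb γ w v = ((μ (w, v) : ℝ) : EReal))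

/-- The partial limiting subdifferential `∂ₓψ(x,w)` defined through the limiting normal
cone to the epigraph of `ψ(·,w)`. -/
def partialSubdiffX {n d : ℕ} (ψ : Euc n → Euc d → EReal) (x : Euc n) (w : Euc d) :
    Set (Euc n) :=
  {v | ∃ r : ℝ, ψ x w = (r : EReal) ∧
    pl2 v (-1 : ℝ) ∈ limitingNormal
      {q : WithLp 2 (Euc n × ℝ) |
        ψ ((WithLp.equiv 2 (Euc n × ℝ)) q).1 w ≤ ((((WithLp.equiv 2 (Euc n × ℝ)) q).2 : ℝ) : EReal)}
      (pl2 x r)}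

/-- The coderivative `D*∂ₓψ(xb,wb,qb)(u)` of the partial subdifferential mapping,
via the limiting normal cone to its graph in `ℝ^n × ℝ^d × ℝ^n`. -/
def coderivPartialSubdiffX {n d : ℕ} (ψ : Euc n → Euc d → EReal) (xb : Euc n) (wb : Euc d)
    (qb : Euc n) (u : Euc n) : Set (Euc n × Euc d) :=
  {P | pl2 (pl2 P.1 P.2) (-u) ∈ limitingNormal
    {t : WithLp 2 (WithLp 2 (Euc n × Euc d) × Euc n) |
      ((WithLp.equiv 2 (WithLp 2 (Euc n × Euc d) × Euc n)) t).2 ∈ partialSubdiffX ψ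
        ((WithLp.equiv 2 (Euc n × Euc d)) (((WithLp.equiv 2 (WithLp 2 (Euc n × Euc d) × Euc n)) t).1)).1
        ((WithLp.equiv 2 (Euc n × Euc d)) (((WithLp.equiv 2 (WithLp 2 (Euc n × Euc d) × Euc n)) t).1)).2}
    (pl2 (pl2 xb wb) qb)}

/-- Partial Hessian in `x` : the derivative in `x` of the partial gradient in `x`. -/
def hessXX {n d : ℕ} (g : Euc n → Euc d → ℝ) (xb : Euc n) (wb : Euc d) : Euc n →L[ℝ] Euc n :=
  fderiv ℝ (fun x => gradient (fun x' => g x' wb) x) xb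

/-- Mixed partial Hessian: derivative in `w` of the partial gradient in `x`. -/
def hessWX {n d : ℕ} (g : Euc n → Euc d → ℝ) (xb : Euc n) (wb : Euc d) : Euc d →L[ℝ] Euc n :=
  fderiv ℝ (fun w => gradient (fun x' => g x' w) xb) wb

/-!
Near `zb` the function `θ` is the sum of an affine function of slope `lam` and of a polyhedral
sublinear function `P` of `z - zb`. Only the directions of `Spar θ zb` matter to `P`, and on these
nondegeneracy makes `∇ₓΦ` right invertible; a local change of variables in `x`, tangent to the
identity, therefore turns the objective into `f(x,w) + P(A F(x,w))`, where `A = ∇ₓΦ(xb,wb)`, the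
partial derivative of `F` is the identity and `f` is the Lagrangian up to a constant. As the graph
of `∂θ` is polyhedral, the domain of `∂²θ(zb,lam)` is the span of the critical cone of `P`.
Everything thus reduces to the positive definiteness of `∇²f` on the span of this cone.

Necessity: full stability gives a Lipschitz, monotone tilt-perturbed argmin map. Comparing its
values along two critical directions yields `‖s‖ ≤ K ‖∇²f s + ν‖` and `0 ≤ ⟨s, ∇²f s + ν⟩` for
differences `s` of critical directions and suitable subgradients `ν` of `P`; the second estimate
makes the Hessian semidefinite on the span, and the first rules out a degenerate direction.

Sufficiency: positivity gives quadratic growth, hence existence of nearby minimizers for all nearby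
parameters. These solve a generalized equation `-μ(x,w,v) ∈ ∂P(F(x,w))`, whose solutions depend in a
Lipschitz way on the parameter because two of them differ, up to first order, by an element of the
span on which `∇²f` is positive definite.
-/

section Subgradients

variable {E : Type*} [NormedAddCommGroup E] [InnerProductSpace ℝ E] {θ : E → EReal} {x y v w : E}

theorem add_le_zero_of_le_of_le {a b : EReal} {r s : ℝ} (hab : a + r ≤ b) (hba : b + s ≤ a)
    (hbot : a ≠ ⊥) (htop : a ≠ ⊤) : r + s ≤ 0 := by
  lift a to ℝ using ⟨htop, hbot⟩
  lift b to ℝ using ⟨fun h => by simp [h] at hba, fun h => by simp [h, ← EReal.coe_add] at hab⟩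
  norm_cast at hab hba
  linarith

theorem coe_add_le_coe_add {a a' b b' : ℝ} {p q : EReal} (h : (a : EReal) + p ≤ b + q)
    (hab : a' - b' ≤ a - b) : (a' : EReal) + p ≤ b' + q := by
  induction p <;> induction q <;> simp_all [← EReal.coe_add]
  linarith

theorem inner_sub_sub_nonneg_of_le_of_le (hx : θ x + (⟪v, y - x⟫ : ℝ) ≤ θ y)
    (hy : θ y + (⟪w, x - y⟫ : ℝ) ≤ θ x) (hbot : θ x ≠ ⊥) (htop : θ x ≠ ⊤) :
    0 ≤ ⟪x - y, v - w⟫ := by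
  have h := add_le_zero_of_le_of_le hx hy hbot htop
  rw [← neg_sub x y, inner_neg_right] at h
  rw [real_inner_comm, inner_sub_left]
  linarith

theorem add_inner_le_of_sub_inner_le {a b : EReal}
    (h : a - (⟪v, x⟫ : ℝ) ≤ b - (⟪v, y⟫ : ℝ)) : a + (⟪v, y - x⟫ : ℝ) ≤ b := by
  induction a <;> induction b <;>
    simp_all [inner_sub_right, ← EReal.coe_sub, ← EReal.coe_add]
  linarith

theorem isClosed_subdiff (θ : E → EReal) (x : E) : IsClosed (subdiff θ x) := by
  simp only [subdiff, ofPred_forall]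
  refine isClosed_iInter fun y => isClosed_le ?_ continuous_const
  have hinner : Continuous fun v : E => ((⟪v, y - x⟫ : ℝ) : EReal) :=
    continuous_coe_real_ereal.comp (by fun_prop)
  exact continuous_iff_continuousAt.2 fun v =>
    (EReal.continuousAt_add (Or.inr (EReal.coe_ne_bot _)) (Or.inr (EReal.coe_ne_top _))).comp₂
      continuousAt_const hinner.continuousAt

theorem convex_subdiff (θ : E → EReal) (x : E) : Convex ℝ (subdiff θ x) := by
  simp only [subdiff, ofPred_forall]
  refine convex_iInter fun y => ?_
  have hlower : IsLowerSet {r : ℝ | θ x + r ≤ θ y} := fun r r' hr h =>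
    (add_le_add_right (EReal.coe_le_coe hr) _).trans h
  convert hlower.ordConnected.convex.linear_preimage (innerₗ E (y - x)) using 1
  ext v
  simp only [mem_ofPred_eq, mem_preimage, innerₗ_apply_apply, real_inner_comm v]

end Subgradients

section Farkas

variable {E : Type*} [NormedAddCommGroup E] [InnerProductSpace ℝ E]

/-- The polar cone of `S`, the set of vectors making a nonpositive product with all of `S`. -/
def polarCone (S : Set E) : PointedCone ℝ E where
  carrier := {s | ∀ c ∈ S, ⟪c, s⟫ ≤ 0}
  add_mem' hs hs' c hc := by simpa [inner_add_right] using add_nonpos (hs c hc) (hs' c hc)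
  zero_mem' := by simp
  smul_mem' := by
    rintro ⟨t, ht⟩ s hs c hc
    simpa [inner_smul_right] using mul_nonpos_of_nonneg_of_nonpos ht (hs c hc)

theorem mem_polarCone {S : Set E} {s : E} : s ∈ polarCone S ↔ ∀ c ∈ S, ⟪c, s⟫ ≤ 0 := Iff.rfl

theorem inner_nonpos_of_mem_hull {S : Set E} {μ x : E} (hμ : μ ∈ PointedCone.hull ℝ S)
    (hx : x ∈ polarCone S) : ⟪μ, x⟫ ≤ 0 := by
  induction hμ using Submodule.span_induction with
  | mem c hc => exact hx c hc
  | zero => simp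
  | add c c' _ _ h h' => simpa [inner_add_left] using add_nonpos h h'
  | smul t c _ h =>
    obtain ⟨t, ht⟩ := t
    simpa [inner_smul_left] using mul_nonpos_of_nonneg_of_nonpos ht h

/-- Bartl's induction step: a point `x₀` polar to `S` with `⟪a, x₀⟫ > 0` gives the projection
along `a` onto the orthogonal complement of `x₀`. -/
def projAlong (a x₀ : E) : E →ₗ[ℝ] E :=
  LinearMap.id - ((⟪a, x₀⟫)⁻¹ • (innerₗ E x₀)).smulRight a

theorem projAlong_apply (a x₀ z : E) : projAlong a x₀ z = z - ((⟪a, x₀⟫)⁻¹ * ⟪x₀, z⟫) • a := rfl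

theorem inner_projAlong (a x₀ z x : E) :
    ⟪projAlong a x₀ z, x⟫ = ⟪z, x - ((⟪a, x₀⟫)⁻¹ * ⟪a, x⟫) • x₀⟫ := by
  simp only [projAlong_apply, inner_sub_left, inner_sub_right, inner_smul_left, inner_smul_right,
    conj_trivial, real_inner_comm z x₀]
  ring

theorem mem_hull_of_forall_polarCone {ι : Type*} (s : Finset ι) (c : ι → E) (ν : E)
    (h : ∀ x ∈ polarCone (c '' s), ⟪ν, x⟫ ≤ 0) : ν ∈ PointedCone.hull ℝ (c '' s) := by
  induction s using Finset.induction_on generalizing c ν with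
  | empty =>
    have hν : ν = 0 := inner_self_eq_zero.1
      ((h ν (by simp [mem_polarCone])).antisymm real_inner_self_nonneg)
    simp [hν]
  | insert k s _ ih =>
    rw [Finset.coe_insert, image_insert_eq] at *
    by_cases hs : ∀ x ∈ polarCone (c '' s), ⟪ν, x⟫ ≤ 0
    · exact Submodule.span_mono (subset_insert _ _) (ih c ν hs)
    push Not at hs
    obtain ⟨x₀, hx₀, hν⟩ := hs
    have hk : 0 < ⟪c k, x₀⟫ := by
      by_contra! hk
      exact absurd (h x₀ (forall_mem_insert.2 ⟨hk, hx₀⟩)) (not_le.2 hν)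
    have hproj : projAlong (c k) x₀ ν ∈ PointedCone.hull ℝ ((projAlong (c k) x₀ ∘ c) '' s) := by
      refine ih _ _ fun x hx => ?_
      rw [inner_projAlong]
      refine h _ (forall_mem_insert.2 ⟨?_, forall_mem_image.2 fun i hi => ?_⟩)
      · rw [inner_sub_right, inner_smul_right]
        field_simp
        simp
      · rw [← inner_projAlong]
        exact hx _ (mem_image_of_mem _ hi)
    rw [image_comp] at hproj
    obtain ⟨μ, hμ, hμν⟩ : ∃ μ ∈ PointedCone.hull ℝ (c '' s),
        projAlong (c k) x₀ μ = projAlong (c k) x₀ ν := by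
      simpa using (Submodule.span_image
        ((projAlong (c k) x₀).restrictScalars {r : ℝ // 0 ≤ r}) (s := c '' s)).le hproj
    refine Submodule.mem_span_insert.2
      ⟨⟨(⟪c k, x₀⟫)⁻¹ * (⟪ν, x₀⟫ - ⟪μ, x₀⟫), ?_⟩, μ, hμ, ?_⟩
    · have := inner_nonpos_of_mem_hull hμ hx₀
      exact mul_nonneg (inv_nonneg.2 hk.le) (by linarith)
    · rw [projAlong_apply, projAlong_apply, sub_eq_sub_iff_add_eq_add] at hμν
      rw [Nonneg.mk_smul, mul_sub, sub_smul, real_inner_comm x₀ ν, real_inner_comm x₀ μ,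
        sub_add_eq_add_sub, eq_sub_iff_add_eq, ← hμν, add_comm]

theorem mem_hull_iff_forall_polarCone {S : Set E} (hS : S.Finite) {ν : E} :
    ν ∈ PointedCone.hull ℝ S ↔ ∀ x ∈ polarCone S, ⟪ν, x⟫ ≤ 0 := by
  refine ⟨fun hν x hx => inner_nonpos_of_mem_hull hν hx, fun h => ?_⟩
  simpa using mem_hull_of_forall_polarCone hS.toFinset id ν (by simpa using h)

theorem mem_span_cone_iff {C : PointedCone ℝ E} {x : E} :
    x ∈ Submodule.span ℝ (C : Set E) ↔ ∃ a ∈ C, ∃ b ∈ C, x = a - b := by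
  refine ⟨fun hx => ?_, ?_⟩
  · induction hx using Submodule.span_induction with
    | mem x hx => exact ⟨x, hx, 0, C.zero_mem, (sub_zero x).symm⟩
    | zero => exact ⟨0, C.zero_mem, 0, C.zero_mem, (sub_zero 0).symm⟩
    | add x y _ _ hx hy =>
      obtain ⟨a, ha, b, hb, rfl⟩ := hx
      obtain ⟨a', ha', b', hb', rfl⟩ := hy
      exact ⟨a + a', C.add_mem ha ha', b + b', C.add_mem hb hb', by abel⟩
    | smul t x _ hx =>
      obtain ⟨a, ha, b, hb, rfl⟩ := hx
      rcases le_total 0 t with ht | ht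
      · exact ⟨t • a, C.smul_mem ht ha, t • b, C.smul_mem ht hb,
          smul_sub _ _ _⟩
      · exact ⟨(-t) • b, C.smul_mem (neg_nonneg.2 ht) hb, (-t) • a,
          C.smul_mem (neg_nonneg.2 ht) ha, by module⟩
  · rintro ⟨a, ha, b, hb, rfl⟩
    exact sub_mem (Submodule.subset_span ha) (Submodule.subset_span hb)

end Farkas

/-- Data of the polyhedral sublinear function `s ↦ max_b ⟪b, s⟫` over the finitely many `slopes`,
with value `+∞` outside the polyhedral cone polar to the finitely many `normals`. -/
structure PolySublinear (E : Type*) where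
  slopes : Finset E
  normals : Finset E
  nonempty : slopes.Nonempty

namespace PolySublinear

variable {E : Type*} [NormedAddCommGroup E] [InnerProductSpace ℝ E] (P : PolySublinear E)
  {s s' μ ν : E}

/-- The support function of the slopes. -/
def supp (s : E) : ℝ := P.slopes.sup' P.nonempty fun b => ⟪b, s⟫

/-- The effective domain. -/
def dom : PointedCone ℝ E := polarCone P.normals

/-- All slopes and normals. -/
def generators : Set E := P.slopes ∪ P.normals

/-- The cone of domain points at which the support function is nonpositive. When `P` is
nonnegative this is its zero set, the critical cone of the models below. -/
def zeroCone : PointedCone ℝ E := polarCone P.generators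

/-- The sublinear function itself, to which `P : PolySublinear E` coerces. -/
def toFun (s : E) : EReal := if s ∈ P.dom then (P.supp s : EReal) else ⊤

instance : CoeFun (PolySublinear E) fun _ => E → EReal where
  coe := toFun

variable {P}

theorem apply_of_mem (hs : s ∈ P.dom) : P s = P.supp s := if_pos hs

theorem apply_of_notMem (hs : s ∉ P.dom) : P s = ⊤ := if_neg hs

theorem apply_ne_bot : P s ≠ ⊥ := by
  by_cases hs : s ∈ P.dom
  · rw [apply_of_mem hs]; exact EReal.coe_ne_bot _
  · rw [apply_of_notMem hs]; exact top_ne_bot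

theorem inner_le_supp {b : E} (hb : b ∈ P.slopes) (s : E) : ⟪b, s⟫ ≤ P.supp s :=
  P.slopes.le_sup' (fun b => ⟪b, s⟫) hb

theorem supp_le_iff {c : ℝ} : P.supp s ≤ c ↔ ∀ b ∈ P.slopes, ⟪b, s⟫ ≤ c := Finset.sup'_le_iff _ _

variable (P s) in
theorem exists_inner_eq_supp : ∃ b ∈ P.slopes, P.supp s = ⟪b, s⟫ :=
  P.slopes.exists_mem_eq_sup' P.nonempty _

theorem supp_zero : P.supp 0 = 0 := by
  obtain ⟨b, -, hb⟩ := P.exists_inner_eq_supp 0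
  rw [hb, inner_zero_right]

theorem supp_add_le : P.supp (s + s') ≤ P.supp s + P.supp s' :=
  supp_le_iff.2 fun b hb => by
    rw [inner_add_right]
    exact add_le_add (inner_le_supp hb s) (inner_le_supp hb s')

theorem supp_smul {t : ℝ} (ht : 0 ≤ t) : P.supp (t • s) = t * P.supp s := by
  apply le_antisymm
  · refine supp_le_iff.2 fun b hb => ?_
    rw [inner_smul_right]
    exact mul_le_mul_of_nonneg_left (inner_le_supp hb s) ht
  · obtain ⟨b, hb, h⟩ := P.exists_inner_eq_supp s
    rw [h, ← inner_smul_right]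
    exact inner_le_supp hb _

variable (P) in
theorem continuous_supp : Continuous P.supp :=
  Continuous.finset_sup'_apply _ fun b _ => by fun_prop

variable (P) in
theorem isClosed_dom : IsClosed (P.dom : Set E) := by
  have hdom : (P.dom : Set E) = ⋂ c ∈ P.normals, {s | ⟪c, s⟫ ≤ 0} := by
    ext s; simp [dom, mem_polarCone]
  rw [hdom]
  exact isClosed_biInter fun c _ => isClosed_le (by fun_prop) continuous_const

theorem mem_zeroCone_iff : s ∈ P.zeroCone ↔ P.supp s ≤ 0 ∧ s ∈ P.dom := by
  simp only [zeroCone, dom, generators, mem_polarCone, supp_le_iff, mem_union, or_imp, forall_and,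
    Finset.mem_coe]

theorem apply_eq_of_inner_eq (h : ∀ c ∈ P.generators, ⟪c, s⟫ = ⟪c, s'⟫) : P s = P s' := by
  have hsupp : P.supp s = P.supp s' :=
    Finset.sup'_congr _ rfl fun b hb => h b (Or.inl hb)
  have hdom : s ∈ P.dom ↔ s' ∈ P.dom :=
    forall₂_congr fun c hc => by rw [h c (Or.inr hc)]
  simp only [toFun, hsupp, hdom]

theorem mem_subdiff_iff : μ ∈ subdiff P s ↔
    s ∈ P.dom ∧ P.supp s = ⟪μ, s⟫ ∧ ∀ g ∈ P.dom, ⟪μ, g⟫ ≤ P.supp g := by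
  constructor
  · intro hμ
    have hs : s ∈ P.dom := by
      by_contra hs
      have h0 := hμ 0
      rw [apply_of_notMem hs, apply_of_mem P.dom.zero_mem] at h0
      simp at h0
    have hineq : ∀ g ∈ P.dom, P.supp s + ⟪μ, g - s⟫ ≤ P.supp g := fun g hg => by
      have h := hμ g
      rw [apply_of_mem hs, apply_of_mem hg] at h
      exact_mod_cast h
    have hzero := hineq 0 P.dom.zero_mem
    have hadd : ∀ g ∈ P.dom, ⟪μ, g⟫ ≤ P.supp g := fun g hg => by
      have h := hineq (s + g) (P.dom.add_mem hs hg)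
      rw [add_sub_cancel_left] at h
      linarith [supp_add_le (P := P) (s := s) (s' := g)]
    rw [supp_zero, zero_sub, inner_neg_right] at hzero
    exact ⟨hs, le_antisymm (by linarith) (hadd s hs), hadd⟩
  · rintro ⟨hs, heq, hle⟩ g
    rw [apply_of_mem hs]
    by_cases hg : g ∈ P.dom
    · rw [apply_of_mem hg, heq, inner_sub_right, ← EReal.coe_add, EReal.coe_le_coe_iff]
      linarith [hle g hg]
    · rw [apply_of_notMem hg]
      exact le_top

theorem mem_subdiff_zero_iff : μ ∈ subdiff P 0 ↔ ∀ g ∈ P.dom, ⟪μ, g⟫ ≤ P.supp g := by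
  simp [mem_subdiff_iff, P.dom.zero_mem, supp_zero]

theorem supp_nonneg (h0 : 0 ∈ subdiff P 0) (hs : s ∈ P.dom) : 0 ≤ P.supp s := by
  simpa using mem_subdiff_zero_iff.1 h0 s hs

theorem zero_mem_subdiff_iff (h0 : 0 ∈ subdiff P 0) : 0 ∈ subdiff P s ↔ s ∈ P.zeroCone := by
  simp only [mem_subdiff_iff, inner_zero_left, mem_zeroCone_iff]
  exact ⟨fun h => ⟨h.2.1.le, h.1⟩,
    fun h => ⟨h.2, h.1.antisymm (supp_nonneg h0 h.2), fun g hg => supp_nonneg h0 hg⟩⟩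

theorem apply_of_mem_zeroCone (h0 : 0 ∈ subdiff P 0) (hs : s ∈ P.zeroCone) : P s = 0 := by
  obtain ⟨hle, hdom⟩ := mem_zeroCone_iff.1 hs
  rw [apply_of_mem hdom, hle.antisymm (supp_nonneg h0 hdom), EReal.coe_zero]

/-- The slopes attaining the maximum and the normals orthogonal to `s`: the subdifferential at `s`
depends on `s` only through these two sets. -/
def activeSet (P : PolySublinear E) (s : E) : Finset E × Finset E :=
  (P.slopes.filter fun b => P.supp s ≤ ⟪b, s⟫, P.normals.filter fun c => ⟪c, s⟫ = 0)

theorem eventually_sub_smul_mem_dom (hs : s ∈ P.dom)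
    (htight : (P.activeSet s).2 ⊆ (P.activeSet s').2) :
    ∀ᶠ t : ℝ in 𝓝[>] 0, s - t • s' ∈ P.dom := by
  refine (eventually_all_finset P.normals).2 fun c hc => ?_
  by_cases hcs : ⟪c, s⟫ = 0
  · have hcs' : ⟪c, s'⟫ = 0 :=
      (Finset.mem_filter.1 (htight (Finset.mem_filter.2 ⟨hc, hcs⟩))).2
    exact Eventually.of_forall fun t => by simp [inner_sub_right, inner_smul_right, hcs, hcs']
  · have htend : Tendsto (fun t : ℝ => ⟪c, s - t • s'⟫) (𝓝 0) (𝓝 ⟪c, s - (0 : ℝ) • s'⟫) :=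
      Continuous.tendsto (by fun_prop) 0
    rw [zero_smul, sub_zero] at htend
    exact ((htend.eventually_lt_const (lt_of_le_of_ne (hs c hc) hcs)).mono
      fun _ h => h.le).filter_mono nhdsWithin_le_nhds

theorem eventually_supp_sub_smul_le (hact : (P.activeSet s).1 ⊆ (P.activeSet s').1) :
    ∀ᶠ t : ℝ in 𝓝[>] 0, P.supp (s - t • s') ≤ P.supp s - t * P.supp s' := by
  simp only [supp_le_iff, inner_sub_right, inner_smul_right]
  refine (eventually_all_finset P.slopes).2 fun b hb => ?_
  by_cases hbs : P.supp s ≤ ⟪b, s⟫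
  · have hbs' : P.supp s' ≤ ⟪b, s'⟫ :=
      (Finset.mem_filter.1 (hact (Finset.mem_filter.2 ⟨hb, hbs⟩))).2
    filter_upwards [self_mem_nhdsWithin] with t (ht : 0 < t)
    have := mul_le_mul_of_nonneg_left hbs' ht.le
    linarith [inner_le_supp hb s]
  · have htend : Tendsto (fun t : ℝ => ⟪b, s⟫ - t * ⟪b, s'⟫ - (P.supp s - t * P.supp s')) (𝓝 0)
        (𝓝 (⟪b, s⟫ - 0 * ⟪b, s'⟫ - (P.supp s - 0 * P.supp s'))) :=
      Continuous.tendsto (by fun_prop) 0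
    refine ((htend.eventually_lt_const (u := 0) (by linarith)).mono fun t ht => ?_).filter_mono
      nhdsWithin_le_nhds
    linarith

theorem subdiff_subset_of_activeSet_le (hs' : s' ∈ P.dom)
    (hact : P.activeSet s ≤ P.activeSet s') : subdiff P s ⊆ subdiff P s' := by
  intro μ hμ
  obtain ⟨hs, heq, hle⟩ := mem_subdiff_iff.1 hμ
  refine mem_subdiff_iff.2 ⟨hs', le_antisymm ?_ (hle s' hs'), hle⟩
  obtain ⟨t, ⟨hdom, hsupp⟩, ht⟩ := (((eventually_sub_smul_mem_dom hs hact.2).and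
    (eventually_supp_sub_smul_le hact.1)).and self_mem_nhdsWithin).exists
  have h := (hle _ hdom).trans hsupp
  rw [inner_sub_right, inner_smul_right, heq] at h
  exact le_of_mul_le_mul_left (by linarith) (show 0 < t from ht)

variable (P) in
theorem finite_range_activeSet : (range P.activeSet).Finite :=
  ((P.slopes.powerset ×ˢ P.normals.powerset).finite_toSet).subset <| range_subset_iff.2 fun _ =>
    Finset.mem_coe.2 (Finset.mem_product.2 ⟨Finset.mem_powerset.2 (Finset.filter_subset _ _),
      Finset.mem_powerset.2 (Finset.filter_subset _ _)⟩)

variable (P) in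
theorem eventually_mem_subdiff_of_mem_subdiff (μ₀ : E) :
    ∀ᶠ μ in 𝓝 μ₀, ∀ s, μ ∈ subdiff P s → μ₀ ∈ subdiff P s := by
  have h : ∀ᶠ μ in 𝓝 μ₀, ∀ T ∈ range P.activeSet, ∀ s, P.activeSet s = T →
      μ ∈ subdiff P s → μ₀ ∈ subdiff P s := by
    refine (eventually_all_finite P.finite_range_activeSet).2 fun T _ => ?_
    by_cases hT : ∃ s' ∈ P.dom, P.activeSet s' = T ∧ μ₀ ∉ subdiff P s'
    · obtain ⟨s', hs', rfl, hμ₀⟩ := hT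
      filter_upwards [(isClosed_subdiff P s').isOpen_compl.mem_nhds hμ₀] with μ hμ s hs hμs
      exact absurd (subdiff_subset_of_activeSet_le hs' hs.le hμs) hμ
    · push Not at hT
      exact Eventually.of_forall fun μ s hs hμs => hT s (mem_subdiff_iff.1 hμs).1 hs
  exact h.mono fun μ hμ s => hμ _ (mem_range_self s) s rfl

theorem exists_inner_le_mul_supp_of_mem_hull
    (hν : ν ∈ PointedCone.hull ℝ P.generators) :
    ∃ T ≥ (0 : ℝ), ∀ s ∈ P.dom, ⟪ν, s⟫ ≤ T * P.supp s := by
  induction hν using Submodule.span_induction with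
  | mem c hc =>
    rcases hc with hb | hc
    · exact ⟨1, zero_le_one, fun s _ => by simpa using inner_le_supp hb s⟩
    · exact ⟨0, le_rfl, fun s hs => by simpa using hs c hc⟩
  | zero => exact ⟨0, le_rfl, by simp⟩
  | add c c' _ _ h h' =>
    obtain ⟨T, hT, hc⟩ := h
    obtain ⟨T', hT', hc'⟩ := h'
    refine ⟨T + T', add_nonneg hT hT', fun s hs => ?_⟩
    rw [inner_add_left, add_mul]
    exact add_le_add (hc s hs) (hc' s hs)
  | smul t c _ h =>
    obtain ⟨T, hT, hc⟩ := h
    obtain ⟨t, ht⟩ := t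
    refine ⟨t * T, mul_nonneg ht hT, fun s hs => ?_⟩
    rw [Nonneg.mk_smul, inner_smul_left, conj_trivial, mul_assoc]
    exact mul_le_mul_of_nonneg_left (hc s hs) ht

theorem eventually_smul_mem_subdiff_zero (h0 : 0 ∈ subdiff P 0)
    (hν : ∀ s ∈ P.zeroCone, ⟪ν, s⟫ ≤ 0) : ∀ᶠ t : ℝ in 𝓝[>] 0, t • ν ∈ subdiff P 0 := by
  have hfin : P.generators.Finite := P.slopes.finite_toSet.union P.normals.finite_toSet
  obtain ⟨T, hT, hle⟩ :=
    exists_inner_le_mul_supp_of_mem_hull ((mem_hull_iff_forall_polarCone hfin).2 hν)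
  have hpos : 0 < (T + 1)⁻¹ := by positivity
  filter_upwards [Ioo_mem_nhdsGT hpos] with t ht
  refine mem_subdiff_zero_iff.2 fun g hg => ?_
  rw [inner_smul_left, conj_trivial]
  have htT : t * T ≤ 1 := by
    have := (lt_inv_comm₀ ht.1 (by positivity)).1 ht.2
    calc t * T ≤ t * t⁻¹ := by have := ht.1.le; gcongr; linarith
      _ = 1 := mul_inv_cancel₀ ht.1.ne'
  calc t * ⟪ν, g⟫ ≤ t * (T * P.supp g) := mul_le_mul_of_nonneg_left (hle g hg) ht.1.le
    _ = t * T * P.supp g := (mul_assoc _ _ _).symm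
    _ ≤ P.supp g := mul_le_of_le_one_left (supp_nonneg h0 hg) htT

theorem inner_eq_zero_of_mem_zeroCone (hμ : μ ∈ subdiff P 0) (hμ' : -μ ∈ subdiff P 0)
    (hs : s ∈ P.zeroCone) : ⟪μ, s⟫ = 0 := by
  obtain ⟨hsupp, hdom⟩ := mem_zeroCone_iff.1 hs
  have h := mem_subdiff_zero_iff.1 hμ s hdom
  have h' := mem_subdiff_zero_iff.1 hμ' s hdom
  rw [inner_neg_left] at h'
  linarith

theorem mem_span_zeroCone_of_forall_inner_eq_zero [FiniteDimensional ℝ E]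
    (h0 : 0 ∈ subdiff P 0)
    (h : ∀ μ ∈ subdiff P 0, -μ ∈ subdiff P 0 → ⟪s, μ⟫ = 0) :
    s ∈ Submodule.span ℝ (P.zeroCone : Set E) := by
  rw [← Submodule.orthogonal_orthogonal (Submodule.span ℝ (P.zeroCone : Set E))]
  intro ν hν
  have hν0 : ∀ s ∈ P.zeroCone, ⟪ν, s⟫ = 0 := fun s hs => by
    rw [real_inner_comm]
    exact hν s (Submodule.subset_span hs)
  obtain ⟨t, ⟨hpos, hneg⟩, ht⟩ :=
    (((eventually_smul_mem_subdiff_zero h0 fun s hs => (hν0 s hs).le).and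
      (eventually_smul_mem_subdiff_zero (ν := -ν) h0 fun s hs => by
        rw [inner_neg_left, hν0 s hs, neg_zero])).and self_mem_nhdsWithin).exists
  have hzero := h _ hpos (by rwa [← smul_neg])
  rw [inner_smul_right] at hzero
  rw [real_inner_comm]
  exact (mul_eq_zero.1 hzero).resolve_left (ne_of_gt ht)

theorem mem_subdiff_zero_of_mem_generators (h0 : 0 ∈ subdiff P 0) (hμ : μ ∈ P.generators) :
    μ ∈ subdiff P 0 := by
  refine mem_subdiff_zero_iff.2 fun g hg => ?_
  rcases hμ with hμ | hμ
  · exact inner_le_supp hμ g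
  · exact (hg μ hμ).trans (supp_nonneg h0 hg)

theorem mem_subdiff_of_inner_eq_zero (h0 : 0 ∈ subdiff P 0) (hμ : μ ∈ subdiff P 0)
    (hs : s ∈ P.zeroCone) (hμs : ⟪μ, s⟫ = 0) : μ ∈ subdiff P s := by
  obtain ⟨hle, hdom⟩ := mem_zeroCone_iff.1 hs
  exact mem_subdiff_iff.2
    ⟨hdom, by rw [hμs, hle.antisymm (supp_nonneg h0 hdom)], mem_subdiff_zero_iff.1 hμ⟩

theorem inner_eq_zero_of_mem_subdiff_add (h0 : 0 ∈ subdiff P 0) (hs : s ∈ P.zeroCone)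
    (hs' : s' ∈ P.zeroCone) (hμ : μ ∈ subdiff P (s + s')) : ⟪μ, s⟫ = 0 := by
  obtain ⟨hdom, heq, hle⟩ := mem_subdiff_iff.1 hμ
  obtain ⟨hsupp, hsdom⟩ := mem_zeroCone_iff.1 hs
  obtain ⟨hsupp', hsdom'⟩ := mem_zeroCone_iff.1 hs'
  rw [inner_add_right] at heq
  linarith [supp_nonneg h0 hdom, hle s hsdom, hle s' hsdom']

theorem eventually_subdiff_subset (hs : s ∈ P.dom) :
    ∀ᶠ s' in 𝓝 s, subdiff P s' ⊆ subdiff P s := by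
  have hslopes : ∀ᶠ s' in 𝓝 s, (P.activeSet s').1 ⊆ (P.activeSet s).1 := by
    refine ((eventually_all_finset P.slopes (p := fun b s' =>
      P.supp s' ≤ ⟪b, s'⟫ → P.supp s ≤ ⟪b, s⟫)).2 fun b _ => ?_).mono fun s' h b hb => ?_
    · by_cases hb : P.supp s ≤ ⟪b, s⟫
      · exact Eventually.of_forall fun _ _ => hb
      · filter_upwards [(isOpen_lt (by fun_prop) P.continuous_supp).mem_nhds (not_le.1 hb)] with
          s' hs' h
        exact absurd h (not_le.2 hs')
    · obtain ⟨hb, hact⟩ := Finset.mem_filter.1 hb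
      exact Finset.mem_filter.2 ⟨hb, h b hb hact⟩
  have hnormals : ∀ᶠ s' in 𝓝 s, (P.activeSet s').2 ⊆ (P.activeSet s).2 := by
    refine ((eventually_all_finset P.normals (p := fun c s' =>
      ⟪c, s'⟫ = 0 → ⟪c, s⟫ = 0)).2 fun c _ => ?_).mono fun s' h c hc => ?_
    · by_cases hc : ⟪c, s⟫ = 0
      · exact Eventually.of_forall fun _ _ => hc
      · filter_upwards [(isOpen_ne_fun (by fun_prop) continuous_const).mem_nhds hc] with s' hs' h
        exact absurd h hs'
    · obtain ⟨hc, hact⟩ := Finset.mem_filter.1 hc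
      exact Finset.mem_filter.2 ⟨hc, h c hc hact⟩
  filter_upwards [hslopes, hnormals] with s' h h'
  exact subdiff_subset_of_activeSet_le hs ⟨h, h'⟩

theorem apply_add_smul_le (hs : s ∈ P.dom) (hs' : s' ∈ P.dom) {t : ℝ} (ht : t ∈ Icc (0 : ℝ) 1) :
    P (s + t • (s' - s)) ≤ ((P.supp s + t * (P.supp s' - P.supp s) : ℝ) : EReal) := by
  have hcomb : s + t • (s' - s) = (1 - t) • s + t • s' := by module
  have ht' : 0 ≤ 1 - t := sub_nonneg.2 ht.2
  rw [hcomb, apply_of_mem (P.dom.add_mem (P.dom.smul_mem ht' hs) (P.dom.smul_mem ht.1 hs')),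
    EReal.coe_le_coe_iff]
  have := supp_add_le (P := P) (s := (1 - t) • s) (s' := t • s')
  rw [supp_smul ht', supp_smul ht.1] at this
  linarith

theorem neg_mem_subdiff_of_isLocalMin {g : E → ℝ} [CompleteSpace E] (hg : HasGradientAt g ν s)
    (hs : s ∈ P.dom) (hmin : IsLocalMin (fun y => (g y : EReal) + P y) s) :
    -ν ∈ subdiff P s := by
  intro s'
  by_cases hs' : s' ∉ P.dom
  · rw [apply_of_notMem hs']; exact le_top
  rw [not_not] at hs'
  rw [apply_of_mem hs, apply_of_mem hs', ← EReal.coe_add, EReal.coe_le_coe_iff, inner_neg_left]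
  have hline : HasDerivAt (fun t : ℝ => s + t • (s' - s)) (s' - s) 0 := by
    simpa using ((hasDerivAt_id (0 : ℝ)).smul_const (s' - s)).const_add s
  have hderiv : HasDerivAt (fun t : ℝ => g (s + t • (s' - s))) ⟪ν, s' - s⟫ 0 := by
    have h0 : s + (0 : ℝ) • (s' - s) = s := by simp
    exact (h0 ▸ hg.hasFDerivAt : HasFDerivAt g _ (s + (0 : ℝ) • (s' - s))).comp_hasDerivAt 0 hline
  have htend : Tendsto (fun t : ℝ => s + t • (s' - s)) (𝓝[>] 0) (𝓝 s) := by
    simpa using hline.continuousAt.tendsto.mono_left nhdsWithin_le_nhds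
  have hslope := hderiv.tendsto_slope_zero_right
  simp only [zero_add, zero_smul, add_zero] at hslope
  suffices P.supp s - P.supp s' ≤ ⟪ν, s' - s⟫ by linarith
  refine ge_of_tendsto hslope ?_
  filter_upwards [htend.eventually hmin, Ioo_mem_nhdsGT one_pos] with t ht ht01
  have hle := ht.trans (add_le_add_right (apply_add_smul_le hs hs' ⟨ht01.1.le, ht01.2.le⟩) _)
  rw [apply_of_mem hs, ← EReal.coe_add, ← EReal.coe_add, EReal.coe_le_coe_iff] at hle
  rw [smul_eq_mul, inv_mul_eq_div, le_div_iff₀ ht01.1]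
  linarith

/-- The polyhedral sublinear function `s ↦ P (A s)`. -/
def comap {E' : Type*} [NormedAddCommGroup E'] [InnerProductSpace ℝ E'] [CompleteSpace E]
    [CompleteSpace E'] (P : PolySublinear E) (A : E' →L[ℝ] E) : PolySublinear E' where
  slopes := P.slopes.image (ContinuousLinearMap.adjoint A)
  normals := P.normals.image (ContinuousLinearMap.adjoint A)
  nonempty := P.nonempty.image _

section Comap

variable {E' : Type*} [NormedAddCommGroup E'] [InnerProductSpace ℝ E'] [CompleteSpace E]
  [CompleteSpace E'] {A : E' →L[ℝ] E} {x : E'}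

theorem mem_zeroCone_comap : x ∈ (P.comap A).zeroCone ↔ A x ∈ P.zeroCone := by
  simp [zeroCone, generators, mem_polarCone, comap, or_imp, forall_and,
    ContinuousLinearMap.adjoint_inner_left]

theorem comap_apply : P.comap A x = P (A x) := by
  have hdom : x ∈ (P.comap A).dom ↔ A x ∈ P.dom := by
    simp [dom, mem_polarCone, comap, ContinuousLinearMap.adjoint_inner_left]
  have hsupp : (P.comap A).supp x = P.supp (A x) := by
    simp [supp, comap, Finset.sup'_image, ContinuousLinearMap.adjoint_inner_left]
  simp only [toFun, hdom, hsupp]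

theorem zero_mem_subdiff_comap (h0 : 0 ∈ subdiff P 0) : 0 ∈ subdiff (P.comap A) 0 := fun x => by
  simpa [comap_apply] using h0 (A x)

end Comap

end PolySublinear

section PolyModel

/-- The function `θ` minorizes, and coincides near `zb` with, the sum of the affine function
`z ↦ c + ⟪lam, z - zb⟫` and the polyhedral sublinear function `P (z - zb)`. -/
structure HasPolyModel {E : Type*} [NormedAddCommGroup E] [InnerProductSpace ℝ E] (θ : E → EReal)
    (zb lam : E) (c : ℝ) (P : PolySublinear E) : Prop where
  eventually_eq : ∀ᶠ z in 𝓝 zb, θ z = ((c + ⟪lam, z - zb⟫ : ℝ) : EReal) + P (z - zb)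
  le : ∀ z, ((c + ⟪lam, z - zb⟫ : ℝ) : EReal) + P (z - zb) ≤ θ z

variable {E : Type*} [NormedAddCommGroup E] [InnerProductSpace ℝ E]
  {θ : E → EReal} {zb lam z μ : E} {c : ℝ} {P : PolySublinear E}

namespace HasPolyModel

theorem apply_self (h : HasPolyModel θ zb lam c P) : θ zb = c := by
  rw [h.eventually_eq.self_of_nhds, sub_self, PolySublinear.apply_of_mem P.dom.zero_mem,
    PolySublinear.supp_zero, inner_zero_right, EReal.coe_zero, add_zero, add_zero]

theorem mem_subdiff_of_sub_mem_subdiff (h : HasPolyModel θ zb lam c P)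
    (hz : θ z = ((c + ⟪lam, z - zb⟫ : ℝ) : EReal) + P (z - zb))
    (hμ : μ - lam ∈ subdiff P (z - zb)) : μ ∈ subdiff θ z := by
  intro z'
  have hP := hμ (z' - zb)
  rw [sub_sub_sub_cancel_right, ← zero_add (P (z' - zb)), add_comm] at hP
  rw [hz, add_right_comm, ← EReal.coe_add]
  refine (coe_add_le_coe_add (b := 0) hP ?_).trans (h.le z')
  simp only [inner_sub_left, inner_sub_right]
  linarith

theorem sub_mem_dom_of_mem_subdiff (h : HasPolyModel θ zb lam c P)
    (hz : θ z = ((c + ⟪lam, z - zb⟫ : ℝ) : EReal) + P (z - zb))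
    (hμ : μ ∈ subdiff θ z) : z - zb ∈ P.dom := by
  by_contra hdom
  have hle := hμ zb
  rw [hz, PolySublinear.apply_of_notMem hdom, h.apply_self, EReal.coe_add_top,
    EReal.top_add_coe] at hle
  exact EReal.coe_ne_top _ (top_le_iff.1 hle)

theorem sub_mem_subdiff_of_mem_subdiff [CompleteSpace E] (h : HasPolyModel θ zb lam c P)
    (hz : ∀ᶠ z' in 𝓝 z, θ z' = ((c + ⟪lam, z' - zb⟫ : ℝ) : EReal) + P (z' - zb))
    (hμ : μ ∈ subdiff θ z) : μ - lam ∈ subdiff P (z - zb) := by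
  have hdom := h.sub_mem_dom_of_mem_subdiff hz.self_of_nhds hμ
  have hgrad : HasGradientAt (fun s : E => c + ⟪lam - μ, s⟫) (lam - μ) (z - zb) := by
    rw [hasGradientAt_iff_hasFDerivAt]
    exact (innerSL ℝ (lam - μ)).hasFDerivAt.const_add c
  rw [← neg_sub lam μ]
  refine PolySublinear.neg_mem_subdiff_of_isLocalMin hgrad hdom ?_
  have hshift : Tendsto (fun s => zb + s) (𝓝 (z - zb)) (𝓝 z) := by
    simpa using (continuous_const_add zb).tendsto (z - zb)
  filter_upwards [hshift.eventually hz] with s hs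
  have hle := hμ (zb + s)
  rw [hz.self_of_nhds, hs, add_sub_cancel_left, add_right_comm, ← EReal.coe_add] at hle
  refine coe_add_le_coe_add hle (le_of_eq ?_)
  simp only [inner_sub_left, inner_sub_right, inner_add_right]
  ring

theorem eventually_mem_subdiff_iff [CompleteSpace E] (h : HasPolyModel θ zb lam c P) :
    ∀ᶠ z in 𝓝 zb, ∀ μ, μ ∈ subdiff θ z ↔ μ - lam ∈ subdiff P (z - zb) := by
  filter_upwards [eventually_eventually_nhds.2 h.eventually_eq] with z hz μ
  exact ⟨h.sub_mem_subdiff_of_mem_subdiff hz, h.mem_subdiff_of_sub_mem_subdiff hz.self_of_nhds⟩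

theorem mem_subdiff_iff [CompleteSpace E] (h : HasPolyModel θ zb lam c P) :
    μ ∈ subdiff θ zb ↔ μ - lam ∈ subdiff P 0 := by
  simpa only [sub_self] using h.eventually_mem_subdiff_iff.self_of_nhds μ

theorem zero_mem_subdiff [CompleteSpace E] (h : HasPolyModel θ zb lam c P)
    (hlam : lam ∈ subdiff θ zb) : 0 ∈ subdiff P 0 := by
  simpa only [sub_self] using h.mem_subdiff_iff.1 hlam

theorem generators_subset_Spar [CompleteSpace E] (h : HasPolyModel θ zb lam c P)
    (hlam : lam ∈ subdiff θ zb) : P.generators ⊆ Spar θ zb := by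
  intro μ hμ
  have hmem : lam + μ ∈ subdiff θ zb := h.mem_subdiff_iff.2 <| by
    rw [add_sub_cancel_left]
    exact PolySublinear.mem_subdiff_zero_of_mem_generators (h.zero_mem_subdiff hlam) hμ
  have hdir := AffineSubspace.vsub_mem_direction (subset_affineSpan ℝ _ hmem)
    (subset_affineSpan ℝ _ hlam)
  rwa [vsub_eq_sub, add_sub_cancel_left] at hdir

end HasPolyModel

end PolyModel

section Sosd

variable {E : Type*} [NormedAddCommGroup E] [InnerProductSpace ℝ E] {Ω : Set E} {x v e : E}

theorem abs_inner_div_norm_le (v y : E) : |⟪v, y⟫ / ‖y‖| ≤ ‖v‖ := by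
  rw [abs_div, abs_norm]
  exact div_le_of_le_mul₀ (norm_nonneg _) (norm_nonneg _) (abs_real_inner_le_norm v y)

theorem mem_frechetNormal_of_eventually (hx : x ∈ Ω) (h : ∀ᶠ y in 𝓝[Ω] x, ⟪v, y - x⟫ ≤ 0) :
    v ∈ frechetNormal Ω x := by
  have : NeBot (𝓝[Ω] x) := mem_closure_iff_nhdsWithin_neBot.1 (subset_closure hx)
  refine limsup_le_of_le (IsBoundedUnder.isCoboundedUnder_le
    (isBoundedUnder_of ⟨-‖v‖, fun y => (abs_le.1 (abs_inner_div_norm_le v (y - x))).1⟩)) ?_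
  filter_upwards [h] with y hy
  exact div_nonpos_of_nonpos_of_nonneg hy (norm_nonneg _)

theorem inner_nonpos_of_mem_frechetNormal (hv : v ∈ frechetNormal Ω x)
    (he : ∀ᶠ t : ℝ in 𝓝[>] 0, x + t • e ∈ Ω) : ⟪v, e⟫ ≤ 0 := by
  rcases eq_or_ne e 0 with rfl | hne
  · simp
  have hline : Tendsto (fun t : ℝ => x + t • e) (𝓝[>] 0) (𝓝[Ω] x) := by
    refine tendsto_nhdsWithin_iff.2 ⟨?_, he⟩
    have hcont : Continuous fun t : ℝ => x + t • e := by fun_prop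
    simpa using (hcont.tendsto 0).mono_left nhdsWithin_le_nhds
  have hfreq : ∃ᶠ y in 𝓝[Ω] x, ⟪v, e⟫ / ‖e‖ ≤ ⟪v, y - x⟫ / ‖y - x‖ := by
    refine hline.frequently (Eventually.frequently ?_)
    filter_upwards [self_mem_nhdsWithin] with t (ht : 0 < t)
    rw [add_sub_cancel_left, inner_smul_right, norm_smul, Real.norm_of_nonneg ht.le,
      mul_div_mul_left _ _ ht.ne']
  have hlimsup := le_limsup_of_frequently_le hfreq
    (isBoundedUnder_of ⟨‖v‖, fun y => (abs_le.1 (abs_inner_div_norm_le v (y - x))).2⟩)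
  simpa using (div_le_iff₀ (norm_pos_iff.2 hne)).1 (hlimsup.trans hv)

theorem mem_limitingNormal_of_tendsto {ι : Type*} {l : Filter ι} [l.NeBot]
    [l.IsCountablyGenerated] {f : ι → E} (hf : Tendsto f l (𝓝 x))
    (h : ∀ᶠ i in l, f i ∈ Ω ∧ v ∈ frechetNormal Ω (f i)) : v ∈ limitingNormal Ω x := by
  obtain ⟨i, hi, hmem⟩ := exists_seq_forall_of_frequently h.frequently
  exact ⟨f ∘ i, fun _ => v, fun k => (hmem k).1, hf.comp hi, tendsto_const_nhds,
    fun k => (hmem k).2⟩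

variable {θ : E → EReal} {zb lam z μ η : E} {c : ℝ} {P : PolySublinear E}

theorem inner_snd_sub_nonpos_of_mem_frechetNormal {q n : WithLp 2 (E × E)}
    (hn : n ∈ frechetNormal {q : WithLp 2 (E × E) | q.snd ∈ subdiff θ q.fst} q)
    (hq : q.snd ∈ subdiff θ q.fst) (hμ : μ ∈ subdiff θ q.fst) : ⟪n.snd, μ - q.snd⟫ ≤ 0 := by
  have hdir : ∀ᶠ t : ℝ in 𝓝[>] 0,
      q + t • pl2 0 (μ - q.snd) ∈ {q : WithLp 2 (E × E) | q.snd ∈ subdiff θ q.fst} := by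
    filter_upwards [Ioo_mem_nhdsGT one_pos] with t ht
    have hmem := (convex_subdiff θ q.fst).add_smul_sub_mem hq hμ ⟨ht.1.le, ht.2.le⟩
    simpa [pl2] using hmem
  simpa [WithLp.prod_inner_apply, pl2] using inner_nonpos_of_mem_frechetNormal hn hdir

theorem pl2_zero_mem_frechetNormal {a b : E} (h0 : 0 ∈ subdiff P 0)
    (hz : ∀ᶠ z' in 𝓝 z, ∀ μ, μ ∈ subdiff θ z' ↔ μ - lam ∈ subdiff P (z' - zb))
    (hlam : lam ∈ subdiff θ z) (ha : a ∈ P.zeroCone)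
    (hb : b ∈ P.zeroCone) {t : ℝ} (ht : 0 < t) (hs : z - zb = t • a + t • b) : pl2 0 (b - a) ∈
      frechetNormal {q : WithLp 2 (E × E) | q.snd ∈ subdiff θ q.fst} (pl2 z lam) := by
  have hdom : z - zb ∈ P.dom := (PolySublinear.mem_subdiff_iff.1 ((hz.self_of_nhds _).1 hlam)).1
  have hsub : Tendsto (fun z' => z' - zb) (𝓝 z) (𝓝 (z - zb)) :=
    (continuous_sub_right zb).tendsto z
  refine mem_frechetNormal_of_eventually hlam ?_
  have hfst : Tendsto WithLp.fst (𝓝[{q : WithLp 2 (E × E) | q.snd ∈ subdiff θ q.fst}] pl2 z lam)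
      (𝓝 z) := ((WithLp.continuous_fst 2 E E).tendsto _).mono_left nhdsWithin_le_nhds
  filter_upwards [hfst.eventually
    (hz.and (hsub.eventually (PolySublinear.eventually_subdiff_subset hdom))),
    self_mem_nhdsWithin] with q ⟨hq, hsubset⟩ hqmem
  have hmem : q.snd - lam ∈ subdiff P (t • a + t • b) := hs ▸ hsubset ((hq _).1 hqmem)
  have hta := P.zeroCone.smul_mem ht.le ha
  have htb := P.zeroCone.smul_mem ht.le hb
  have hinner : ⟪t • (b - a), q.snd - lam⟫ = 0 := by
    rw [real_inner_comm, smul_sub, inner_sub_right,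
      PolySublinear.inner_eq_zero_of_mem_subdiff_add h0 hta htb hmem,
      PolySublinear.inner_eq_zero_of_mem_subdiff_add h0 htb hta (add_comm (t • a) _ ▸ hmem),
      sub_zero]
  rw [inner_smul_left, conj_trivial, mul_eq_zero, or_iff_right ht.ne'] at hinner
  simpa [WithLp.prod_inner_apply, pl2] using hinner.le

namespace HasPolyModel

variable [CompleteSpace E]

theorem inner_eq_zero_of_sosd_nonempty (h : HasPolyModel θ zb lam c P)
    (hlam : lam ∈ subdiff θ zb) (hη : (sosd θ zb lam η).Nonempty) (hμ : μ ∈ subdiff P 0)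
    (hμ' : -μ ∈ subdiff P 0) : ⟪η, μ⟫ = 0 := by
  obtain ⟨w, qs, ns, hqs, hq, hn, hN⟩ := hη
  have hfst : Tendsto (fun k => (qs k).fst) atTop (𝓝 zb) :=
    ((WithLp.continuous_fst 2 E E).tendsto _).comp hq
  have hsnd : Tendsto (fun k => (qs k).snd) atTop (𝓝 lam) :=
    ((WithLp.continuous_snd 2 E E).tendsto _).comp hq
  have hnsnd : Tendsto (fun k => (ns k).snd) atTop (𝓝 (-η)) :=
    ((WithLp.continuous_snd 2 E E).tendsto _).comp hn
  have hnonpos : ∀ μ, μ ∈ subdiff P 0 → -μ ∈ subdiff P 0 → ⟪-η, μ⟫ ≤ 0 := by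
    intro μ hμ hμ'
    have hlim : Tendsto (fun k => ⟪(ns k).snd, lam + μ - (qs k).snd⟫) atTop (𝓝 ⟪-η, μ⟫) := by
      simpa using hnsnd.inner (𝕜 := ℝ) (hsnd.const_sub (lam + μ))
    refine le_of_tendsto hlim ?_
    have hsub : Tendsto (fun k => (qs k).snd - lam) atTop (𝓝 0) := by
      simpa using hsnd.sub_const lam
    filter_upwards [hfst.eventually h.eventually_mem_subdiff_iff,
      hsub.eventually (P.eventually_mem_subdiff_of_mem_subdiff 0)] with k hiff hsmall
    refine inner_snd_sub_nonpos_of_mem_frechetNormal (hN k) (hqs k) ((hiff _).2 ?_)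
    have h0 := h.zero_mem_subdiff hlam
    have hcone := (PolySublinear.zero_mem_subdiff_iff h0).1 (hsmall _ ((hiff _).1 (hqs k)))
    rw [add_sub_cancel_left]
    exact PolySublinear.mem_subdiff_of_inner_eq_zero h0 hμ hcone
      (PolySublinear.inner_eq_zero_of_mem_zeroCone hμ hμ' hcone)
  have hpos := hnonpos μ hμ hμ'
  have hneg := hnonpos (-μ) hμ' (by rwa [neg_neg])
  rw [inner_neg_left] at hpos
  rw [inner_neg_neg] at hneg
  linarith

theorem zero_mem_sosd_sub {a b : E} (h : HasPolyModel θ zb lam c P) (hlam : lam ∈ subdiff θ zb)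
    (ha : a ∈ P.zeroCone) (hb : b ∈ P.zeroCone) : 0 ∈ sosd θ zb lam (a - b) := by
  have h0 := h.zero_mem_subdiff hlam
  have hline : Tendsto (fun t : ℝ => zb + t • (a + b)) (𝓝[>] 0) (𝓝 zb) := by
    have hcont : Continuous fun t : ℝ => zb + t • (a + b) := by fun_prop
    simpa using (hcont.tendsto 0).mono_left nhdsWithin_le_nhds
  have hpair : Tendsto (fun t : ℝ => pl2 (zb + t • (a + b)) lam) (𝓝[>] 0) (𝓝 (pl2 zb lam)) :=
    ((WithLp.prod_continuous_toLp 2 E E).tendsto (zb, lam)).comp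
      (hline.prodMk_nhds tendsto_const_nhds)
  refine mem_limitingNormal_of_tendsto hpair ?_
  filter_upwards [hline.eventually h.eventually_mem_subdiff_iff.eventually_nhds,
    self_mem_nhdsWithin] with t ht (ht0 : 0 < t)
  have hmem : lam ∈ subdiff θ (zb + t • (a + b)) := by
    rw [ht.self_of_nhds, sub_self, add_sub_cancel_left, PolySublinear.zero_mem_subdiff_iff h0]
    exact P.zeroCone.smul_mem ht0.le (P.zeroCone.add_mem ha hb)
  rw [neg_sub]
  exact ⟨hmem, pl2_zero_mem_frechetNormal h0 ht hmem ha hb ht0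
    (by rw [add_sub_cancel_left, smul_add])⟩

theorem sosd_nonempty_iff [FiniteDimensional ℝ E] (h : HasPolyModel θ zb lam c P)
    (hlam : lam ∈ subdiff θ zb) :
    (sosd θ zb lam η).Nonempty ↔ η ∈ Submodule.span ℝ (P.zeroCone : Set E) := by
  refine ⟨fun hη => PolySublinear.mem_span_zeroCone_of_forall_inner_eq_zero
    (h.zero_mem_subdiff hlam) fun μ => h.inner_eq_zero_of_sosd_nonempty hlam hη, fun hη => ?_⟩
  obtain ⟨a, ha, b, hb, rfl⟩ := mem_span_cone_iff.1 hη
  exact ⟨0, h.zero_mem_sosd_sub hlam ha hb⟩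

end HasPolyModel

end Sosd

section CPWL

variable {m l p : ℕ} {a : Fin l → Euc m} {α : Fin l → ℝ} {d : Fin p → Euc m} {β : Fin p → ℝ}
  {zb : Euc m}

theorem cpwlFun_of_mem {z : Euc m} (hz : z ∈ cpwlDom d β) :
    cpwlFun a α d β z = ((⨆ i, (⟪a i, z⟫ - α i) : ℝ) : EReal) := if_pos hz

theorem cpwlFun_of_notMem {z : Euc m} (hz : z ∉ cpwlDom d β) : cpwlFun a α d β z = ⊤ := if_neg hz

theorem mem_Kact_iff (hzb : zb ∈ cpwlDom d β) {i : Fin l} :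
    i ∈ Kact a α d β zb ↔ ⨆ j, (⟪a j, zb⟫ - α j) = ⟪a i, zb⟫ - α i := by
  rw [Kact, mem_ofPred_eq, cpwlFun_of_mem hzb, EReal.coe_eq_coe_iff]

theorem nonempty_Kact (hl : 0 < l) (hzb : zb ∈ cpwlDom d β) : (Kact a α d β zb).Nonempty := by
  have : Nonempty (Fin l) := ⟨⟨0, hl⟩⟩
  obtain ⟨i, hi⟩ := exists_eq_ciSup_of_finite (f := fun j => ⟪a j, zb⟫ - α j)
  exact ⟨i, (mem_Kact_iff hzb).2 hi.symm⟩

theorem iSup_add_inner_sub_eq (hzb : zb ∈ cpwlDom d β) {i : Fin l} (hi : i ∈ Kact a α d β zb)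
    (lam z : Euc m) :
    (⨆ j, (⟪a j, zb⟫ - α j)) + ⟪lam, z - zb⟫ + ⟪a i - lam, z - zb⟫ = ⟪a i, z⟫ - α i := by
  rw [(mem_Kact_iff hzb).1 hi]
  simp only [inner_sub_left, inner_sub_right]
  ring

/-- The model at `zb` of a CPWL function minus the linear form `⟨lam, ·⟩`: only the affine pieces
and the constraints active at `zb` remain. -/
def cpwlModel (a : Fin l → Euc m) (α : Fin l → ℝ) {d : Fin p → Euc m} {β : Fin p → ℝ} (hl : 0 < l)
    (hzb : zb ∈ cpwlDom d β) (lam : Euc m) : PolySublinear (Euc m) where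
  slopes := (Kact a α d β zb).toFinset.image fun i => a i - lam
  normals := (Iact d β zb).toFinset.image d
  nonempty := ((Set.toFinset_nonempty.2 (nonempty_Kact hl hzb)).image _)

variable (hl : 0 < l) (hzb : zb ∈ cpwlDom d β) (lam : Euc m)

theorem mem_dom_cpwlModel {s : Euc m} :
    s ∈ (cpwlModel a α hl hzb lam).dom ↔ ∀ j ∈ Iact d β zb, ⟪d j, s⟫ ≤ 0 := by
  simp [PolySublinear.dom, cpwlModel, mem_polarCone]

theorem sub_mem_dom_cpwlModel {z : Euc m} (hz : z ∈ cpwlDom d β) :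
    z - zb ∈ (cpwlModel a α hl hzb lam).dom :=
  (mem_dom_cpwlModel hl hzb lam).2 fun j hj => by
    rw [inner_sub_right, show ⟪d j, zb⟫ = β j from hj]
    exact sub_nonpos.2 (hz j)

theorem eventually_mem_cpwlDom_iff :
    ∀ᶠ z in 𝓝 zb, z ∈ cpwlDom d β ↔ z - zb ∈ (cpwlModel a α hl hzb lam).dom := by
  have hinactive : ∀ᶠ z in 𝓝 zb, ∀ j, j ∉ Iact d β zb → ⟪d j, z⟫ ≤ β j :=
    eventually_all.2 fun j => eventually_imp_distrib_left.2 fun hj =>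
      ((continuous_const.inner continuous_id).tendsto zb).eventually_le_const
        ((hzb j).lt_of_ne hj)
  filter_upwards [hinactive] with z hz
  refine ⟨sub_mem_dom_cpwlModel hl hzb lam, fun hs j => ?_⟩
  by_cases hj : j ∈ Iact d β zb
  · have hle := (mem_dom_cpwlModel hl hzb lam).1 hs j hj
    rwa [inner_sub_right, show ⟪d j, zb⟫ = β j from hj, sub_nonpos] at hle
  · exact hz j hj

theorem add_supp_cpwlModel_le (z : Euc m) :
    (⨆ i, (⟪a i, zb⟫ - α i)) + ⟪lam, z - zb⟫ + (cpwlModel a α hl hzb lam).supp (z - zb) ≤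
      ⨆ i, (⟪a i, z⟫ - α i) := by
  obtain ⟨b, hb, hsupp⟩ := (cpwlModel a α hl hzb lam).exists_inner_eq_supp (z - zb)
  obtain ⟨i, hi, rfl⟩ := Finset.mem_image.1 hb
  rw [hsupp, iSup_add_inner_sub_eq hzb (Set.mem_toFinset.1 hi)]
  exact le_ciSup (finite_range fun i => ⟪a i, z⟫ - α i).bddAbove i

theorem eventually_iSup_eq_add_supp_cpwlModel :
    ∀ᶠ z in 𝓝 zb, ⨆ i, (⟪a i, z⟫ - α i) = (⨆ i, (⟪a i, zb⟫ - α i)) + ⟪lam, z - zb⟫ +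
      (cpwlModel a α hl hzb lam).supp (z - zb) := by
  have : Nonempty (Fin l) := ⟨⟨0, hl⟩⟩
  obtain ⟨k, hk⟩ := nonempty_Kact (a := a) (α := α) hl hzb
  have hinactive : ∀ᶠ z in 𝓝 zb, ∀ i, i ∉ Kact a α d β zb → ⟪a i, z⟫ - α i < ⟪a k, z⟫ - α k := by
    refine eventually_all.2 fun i => eventually_imp_distrib_left.2 fun hi => ?_
    have hlt : ⟪a i, zb⟫ - α i < ⟪a k, zb⟫ - α k := by
      rw [← (mem_Kact_iff hzb).1 hk]
      exact (le_ciSup (finite_range fun i => ⟪a i, zb⟫ - α i).bddAbove i).lt_of_ne'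
        (mt (mem_Kact_iff hzb).2 hi)
    exact ContinuousAt.eventually_lt (by fun_prop) (by fun_prop) hlt
  filter_upwards [hinactive] with z hz
  refine (ciSup_le fun i => ?_).antisymm (add_supp_cpwlModel_le hl hzb lam z)
  have hactive : ∀ i ∈ Kact a α d β zb, ⟪a i, z⟫ - α i ≤ (⨆ i, (⟪a i, zb⟫ - α i)) +
      ⟪lam, z - zb⟫ + (cpwlModel a α hl hzb lam).supp (z - zb) := fun i hi => by
    rw [← iSup_add_inner_sub_eq hzb hi lam z]
    gcongr
    exact PolySublinear.inner_le_supp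
      (Finset.mem_image_of_mem _ (Set.mem_toFinset.2 hi)) (z - zb)
  by_cases hi : i ∈ Kact a α d β zb
  · exact hactive i hi
  · exact (hz i hi).le.trans (hactive k hk)

theorem hasPolyModel_cpwlFun : HasPolyModel (cpwlFun a α d β) zb lam (⨆ i, (⟪a i, zb⟫ - α i))
    (cpwlModel a α hl hzb lam) where
  eventually_eq := by
    filter_upwards [eventually_mem_cpwlDom_iff (a := a) (α := α) hl hzb lam,
      eventually_iSup_eq_add_supp_cpwlModel hl hzb lam] with z hdom hval
    by_cases hz : z ∈ cpwlDom d β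
    · rw [cpwlFun_of_mem hz, PolySublinear.apply_of_mem (hdom.1 hz), hval, EReal.coe_add]
    · rw [cpwlFun_of_notMem hz, PolySublinear.apply_of_notMem (mt hdom.2 hz), EReal.coe_add_top]
  le z := by
    by_cases hz : z ∈ cpwlDom d β
    · rw [cpwlFun_of_mem hz, PolySublinear.apply_of_mem (sub_mem_dom_cpwlModel hl hzb lam hz),
        ← EReal.coe_add]
      exact EReal.coe_le_coe (add_supp_cpwlModel_le hl hzb lam z)
    · rw [cpwlFun_of_notMem hz]
      exact le_top

end CPWL

section SecondOrderCalculus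

variable {E : Type*} [NormedAddCommGroup E] [InnerProductSpace ℝ E]
  {E' : Type*} [NormedAddCommGroup E'] [NormedSpace ℝ E']

theorem exists_norm_sub_sub_fderiv_le {f : E → E'} {x : E} (hf : ContDiffAt ℝ 2 f x) :
    ∃ r ≥ (0 : ℝ), ∃ U ∈ 𝓝 x, ∀ y ∈ U, ∀ z ∈ U,
      ‖f z - f y - fderiv ℝ f y (z - y)‖ ≤ r * ‖z - y‖ ^ 2 := by
  obtain ⟨K, t, ht, hK⟩ :=
    (hf.fderiv_right (m := 1) (by norm_num)).exists_lipschitzOnWith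
  have hdiff : ∀ᶠ y in 𝓝 x, DifferentiableAt ℝ f y :=
    (hf.eventually (by simp)).mono fun y hy => hy.differentiableAt (by norm_num)
  obtain ⟨δ, hδ, hball⟩ := Metric.eventually_nhds_iff_ball.1 (hdiff.and ht)
  refine ⟨K, K.2, ball x δ, ball_mem_nhds x hδ, fun y hy z hz => ?_⟩
  have hseg : segment ℝ y z ⊆ ball x δ := (convex_ball x δ).segment_subset hy hz
  have hlip : ∀ p ∈ segment ℝ y z, ‖fderiv ℝ f p - fderiv ℝ f y‖ ≤ K * ‖z - y‖ := fun p hp =>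
    (hK.norm_sub_le (hball p (hseg hp)).2 (hball y hy).2).trans
      (mul_le_mul_of_nonneg_left (norm_sub_le_of_mem_segment hp) K.2)
  refine ((convex_segment y z).norm_image_sub_le_of_norm_fderiv_le'
    (fun p hp => (hball p (hseg hp)).1) hlip (left_mem_segment ℝ y z)
    (right_mem_segment ℝ y z)).trans_eq ?_
  rw [sq, mul_assoc]

theorem inner_eq_zero_of_inner_self_eq_zero {H : E →L[ℝ] E} {S : Submodule ℝ E} {u w : E}
    (hsymm : ∀ u w, ⟪H u, w⟫ = ⟪H w, u⟫) (hnonneg : ∀ u ∈ S, 0 ≤ ⟪u, H u⟫) (hu : u ∈ S)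
    (hu0 : ⟪u, H u⟫ = 0) (hw : w ∈ S) : ⟪H u, w⟫ = 0 := by
  let B : LinearMap.BilinForm ℝ S := ((innerₗ E) ∘ₗ H.toLinearMap).domRestrict₁₂ S S
  have hCS := LinearMap.BilinForm.apply_mul_apply_le_of_forall_zero_le B
    (fun y => (hnonneg y y.2).trans_eq (real_inner_comm _ _)) ⟨u, hu⟩ ⟨w, hw⟩
  have hmul : ⟪H u, w⟫ * ⟪H w, u⟫ ≤ ⟪H u, u⟫ * ⟪H w, w⟫ := hCS
  rw [hsymm w u, real_inner_comm u (H u), hu0, zero_mul] at hmul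
  exact mul_self_eq_zero.1 (hmul.antisymm (mul_self_nonneg _))

variable [CompleteSpace E] {f : E → ℝ} {x : E}

theorem contDiffAt_gradient (hf : ContDiffAt ℝ 2 f x) : ContDiffAt ℝ 1 (gradient f) x :=
  (InnerProductSpace.toDual ℝ E).symm.toContinuousLinearEquiv.contDiff.contDiffAt.comp x
    (hf.fderiv_right (by norm_num))

theorem hasFDerivAt_gradient (hf : ContDiffAt ℝ 2 f x) :
    HasFDerivAt (gradient f) (fderiv ℝ (gradient f) x) x :=
  ((contDiffAt_gradient hf).differentiableAt one_ne_zero).hasFDerivAt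

theorem inner_fderiv_gradient (hf : ContDiffAt ℝ 2 f x) (u w : E) :
    ⟪fderiv ℝ (gradient f) x u, w⟫ = fderiv ℝ (fderiv ℝ f) x u w := by
  have hcomp := (InnerProductSpace.toDual ℝ E).toContinuousLinearEquiv.hasFDerivAt.comp x
    (hasFDerivAt_gradient hf)
  have hfun : fderiv ℝ f =
      (InnerProductSpace.toDual ℝ E).toContinuousLinearEquiv ∘ gradient f :=
    toDual_comp_gradient.symm
  rw [hfun, hcomp.fderiv]
  rfl

theorem inner_fderiv_gradient_comm (hf : ContDiffAt ℝ 2 f x) (u w : E) :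
    ⟪fderiv ℝ (gradient f) x u, w⟫ = ⟪fderiv ℝ (gradient f) x w, u⟫ := by
  rw [inner_fderiv_gradient hf, inner_fderiv_gradient hf]
  exact hf.isSymmSndFDerivAt (by simp) u w

end SecondOrderCalculus

section TiltStability

variable {E : Type*} [NormedAddCommGroup E] [InnerProductSpace ℝ E]

theorem map_nhds_eq_of_strongly_monotone [CompleteSpace E] {g : E → E} {v : E} {V : Set E}
    {K : ℝ≥0} (hV : V ∈ 𝓝 v) (hLip : LipschitzOnWith K g V)
    (hmono : ∀ y ∈ V, ∀ z ∈ V, ‖y - z‖ ^ 2 ≤ ⟪g y - g z, y - z⟫) : map g (𝓝 v) = 𝓝 (g v) := by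
  -- `g` approximates the homothety of ratio `L` with a constant smaller than `L`.
  set L : ℝ≥0 := K ^ 2 + 1 with hL
  have hLpos : 0 < L := by positivity
  have happrox : ApproximatesLinearOn g ((L : ℝ) • ContinuousLinearMap.id ℝ E) V
      (NNReal.sqrt (L * K ^ 2)) := by
    intro y hy z hz
    refine le_of_sq_le_sq ?_ (by positivity)
    have hlip : ‖g y - g z‖ ^ 2 ≤ K ^ 2 * ‖y - z‖ ^ 2 := by
      rw [← mul_pow]
      exact pow_le_pow_left₀ (norm_nonneg _) (hLip.norm_sub_le hy hz) 2
    have hL' : (L : ℝ) = K ^ 2 + 1 := by rw [hL]; push_cast; rfl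
    calc ‖g y - g z - ((L : ℝ) • ContinuousLinearMap.id ℝ E) (y - z)‖ ^ 2
        = ‖g y - g z‖ ^ 2 - 2 * L * ⟪g y - g z, y - z⟫ + L ^ 2 * ‖y - z‖ ^ 2 := by
          rw [smul_apply, ContinuousLinearMap.id_apply, norm_sub_sq_real,
            inner_smul_right, norm_smul, mul_pow, NNReal.norm_eq]
          ring
      _ ≤ K ^ 2 * ‖y - z‖ ^ 2 - 2 * L * ‖y - z‖ ^ 2 + L ^ 2 * ‖y - z‖ ^ 2 := by
          gcongr
          exact hmono y hy z hz
      _ ≤ L * K ^ 2 * ‖y - z‖ ^ 2 := by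
          rw [hL']
          nlinarith [sq_nonneg ‖y - z‖]
      _ = (NNReal.sqrt (L * K ^ 2) * ‖y - z‖) ^ 2 := by
          rw [mul_pow, Real.coe_sqrt, Real.sq_sqrt (by positivity)]
          push_cast
          rfl
  refine happrox.map_nhds_eq (f'symm := ?_) hV (Or.inr ?_)
  · exact
      { toFun := fun y => (L : ℝ)⁻¹ • y
        nnnorm := L⁻¹
        bound' := fun y => by rw [norm_smul, norm_inv, NNReal.norm_eq, NNReal.coe_inv]
        right_inv' := fun y => by simp [hLpos.ne'] }
  · rw [inv_inv, ← NNReal.sqrt_sq L, NNReal.sqrt_lt_sqrt, sq, NNReal.sqrt_mul_self]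
    exact mul_lt_mul_of_pos_left (lt_add_one _) hLpos

/-- The set of proximal subgradients of `ψ` at `x` with modulus `R` that are valid on `U`. -/
def proxSubdiffOn (ψ : E → EReal) (U : Set E) (R : ℝ) (x : E) : Set E :=
  {v | ∀ y ∈ U, ψ x + (⟪v, y - x⟫ - R * ‖y - x‖ ^ 2 : ℝ) ≤ ψ y}

/-- Tilt stability of a local minimizer `x` of `ψ - ⟪v, ·⟫` (Poliquin–Rockafellar): the linearly
perturbed problems have minimizers over a fixed neighborhood of `x` that depend Lipschitz
continuously on the perturbation. -/
def IsTiltStable (ψ : E → EReal) (x v : E) : Prop :=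
  ∃ U ∈ 𝓝 x, ∃ V ∈ 𝓝 v, ∃ (σ : E → E) (K : ℝ≥0), LipschitzOnWith K σ V ∧ σ v = x ∧
    ∀ w ∈ V, ψ (σ w) ≠ ⊤ ∧ ∀ y ∈ U, ψ (σ w) + (⟪w, y - σ w⟫ : ℝ) ≤ ψ y

theorem eventually_eq_of_mem_proxSubdiffOn [CompleteSpace E] {ψ : E → EReal} {σ : E → E}
    {U V : Set E} {v : E} {K : ℝ≥0} {R : ℝ} (hbot : ∀ y, ψ y ≠ ⊥)
    (hLip : LipschitzOnWith K σ V) (hV : V ∈ 𝓝 v) (hU : U ∈ 𝓝 (σ v)) (hR : 0 ≤ R)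
    (hmin : ∀ w ∈ V, ψ (σ w) ≠ ⊤ ∧ ∀ y ∈ U, ψ (σ w) + (⟪w, y - σ w⟫ : ℝ) ≤ ψ y) :
    ∀ᶠ q : E × E in 𝓝 (σ v, v), q.2 ∈ proxSubdiffOn ψ U R q.1 → q.2 ∈ V ∧ σ q.2 = q.1 := by
  have hσ : ContinuousAt σ v := hLip.continuousOn.continuousAt hV
  set V' := V ∩ σ ⁻¹' U
  have hV' : V' ∈ 𝓝 v := inter_mem hV (hσ hU)
  have hmono : ∀ w ∈ V', ∀ w' ∈ V', 0 ≤ ⟪σ w - σ w', w - w'⟫ := fun w hw w' hw' =>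
    inner_sub_sub_nonneg_of_le_of_le ((hmin w hw.1).2 _ hw'.2) ((hmin w' hw'.1).2 _ hw.2)
      (hbot _) (hmin w hw.1).1
  have hgLip : LipschitzOnWith (1 + ‖R + 1‖₊ * K) (fun w => w + (R + 1) • σ w) V' :=
    LipschitzWith.id.lipschitzOnWith.add
      ((lipschitzWith_smul (R + 1)).comp_lipschitzOnWith (hLip.mono inter_subset_left))
  have hgmono : ∀ w ∈ V', ∀ w' ∈ V',
      ‖w - w'‖ ^ 2 ≤ ⟪w + (R + 1) • σ w - (w' + (R + 1) • σ w'), w - w'⟫ := by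
    intro w hw w' hw'
    rw [add_sub_add_comm, ← smul_sub, inner_add_left, real_inner_self_eq_norm_sq,
      inner_smul_left, conj_trivial, le_add_iff_nonneg_right]
    exact mul_nonneg (by linarith) (hmono w hw w' hw')
  have himage := image_mem_map (m := fun w => w + (R + 1) • σ w) hV'
  rw [map_nhds_eq_of_strongly_monotone hV' hgLip hgmono] at himage
  have hcont : Tendsto (fun q : E × E => q.2 + (R + 1) • q.1) (𝓝 (σ v, v))
      (𝓝 (v + (R + 1) • σ v)) :=
    (Continuous.tendsto (by fun_prop) (σ v, v))
  filter_upwards [hcont himage, continuous_fst.continuousAt.preimage_mem_nhds hU]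
    with ⟨x, w⟩ ⟨w', hw', heq⟩ hx hprox
  have hsub : w - w' = (R + 1) • (σ w' - x) := by
    rw [smul_sub, sub_eq_sub_iff_add_eq_add, add_comm _ w']
    exact heq.symm
  have hsq : ‖σ w' - x‖ ^ 2 ≤ 0 := by
    have hle := add_le_zero_of_le_of_le ((hmin w' hw'.1).2 x hx) (hprox (σ w') hw'.2) (hbot _)
      (hmin w' hw'.1).1
    have hinner : ⟪w - w', σ w' - x⟫ = (R + 1) * ‖σ w' - x‖ ^ 2 := by
      rw [hsub, inner_smul_left, conj_trivial, real_inner_self_eq_norm_sq]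
    simp only [inner_sub_left, inner_sub_right] at hle hinner
    linarith
  have hx' : σ w' = x :=
    sub_eq_zero.1 (norm_eq_zero.1 (pow_eq_zero_iff two_ne_zero |>.1 (hsq.antisymm (sq_nonneg _))))
  rw [hx', sub_self, smul_zero, sub_eq_zero] at hsub
  exact hsub ▸ ⟨hw'.1, hx'⟩

theorem IsTiltStable.exists_eventually_norm_sub_le [CompleteSpace E] {ψ : E → EReal} {x v : E}
    (h : IsTiltStable ψ x v) (hbot : ∀ y, ψ y ≠ ⊥) :
    ∃ K : ℝ≥0, ∀ U ∈ 𝓝 x, ∀ R ≥ (0 : ℝ), ∀ᶠ r : (E × E) × E × E in 𝓝 ((x, v), x, v),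
      r.1.2 ∈ proxSubdiffOn ψ U R r.1.1 → r.2.2 ∈ proxSubdiffOn ψ U R r.2.1 →
      ‖r.1.1 - r.2.1‖ ≤ K * ‖r.1.2 - r.2.2‖ ∧ 0 ≤ ⟪r.1.1 - r.2.1, r.1.2 - r.2.2⟫ := by
  obtain ⟨U₀, hU₀, V, hV, σ, K, hLip, rfl, hmin⟩ := h
  refine ⟨K, fun U hU R hR => ?_⟩
  have hUU : U₀ ∩ U ∈ 𝓝 (σ v) := inter_mem hU₀ hU
  have hprox := eventually_eq_of_mem_proxSubdiffOn hbot hLip hV hUU hR fun w hw =>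
    ⟨(hmin w hw).1, fun y hy => (hmin w hw).2 y hy.1⟩
  have hfst : Tendsto (fun q : E × E => q.1) (𝓝 (σ v, v)) (𝓝 (σ v)) := continuous_fst.tendsto _
  filter_upwards [(hprox.and (hfst hU₀)).prod_nhds (hprox.and (hfst hU₀))]
    with ⟨⟨x₁, v₁⟩, x₂, v₂⟩ ⟨⟨h₁, hx₁⟩, h₂, hx₂⟩ hp₁ hp₂
  obtain ⟨hv₁, hσ₁ : σ v₁ = x₁⟩ := h₁ fun y hy => hp₁ y hy.2
  obtain ⟨hv₂, hσ₂ : σ v₂ = x₂⟩ := h₂ fun y hy => hp₂ y hy.2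
  subst hσ₁ hσ₂
  exact ⟨hLip.norm_sub_le hv₁ hv₂, inner_sub_sub_nonneg_of_le_of_le
    ((hmin v₁ hv₁).2 _ hx₂) ((hmin v₂ hv₂).2 _ hx₁) (hbot _) (hmin v₁ hv₁).1⟩

theorem exists_add_adjoint_mem_proxSubdiffOn [CompleteSpace E] {E' : Type*} [NormedAddCommGroup E']
    [InnerProductSpace ℝ E'] [CompleteSpace E'] {f : E → ℝ} {g : E → E'} {x : E}
    (hf : ContDiffAt ℝ 2 f x) (hg : ContDiffAt ℝ 2 g x) (θ : E' → EReal) {M : ℝ} (hM : 0 ≤ M) :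
    ∃ R ≥ (0 : ℝ), ∃ U ∈ 𝓝 x, ∀ y ∈ U, ∀ ν ∈ subdiff θ (g y), ‖ν‖ ≤ M →
      gradient f y + (fderiv ℝ g y).adjoint ν ∈
        proxSubdiffOn (fun z => f z + θ (g z)) U R y := by
  obtain ⟨rf, hrf, Uf, hUf, hf⟩ := exists_norm_sub_sub_fderiv_le hf
  obtain ⟨rg, hrg, Ug, hUg, hg⟩ := exists_norm_sub_sub_fderiv_le hg
  refine ⟨rf + M * rg, by positivity, Uf ∩ Ug, inter_mem hUf hUg, ?_⟩
  intro y hy ν hν hνM z hz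
  have hfle := (abs_le.1 (hf y hy.1 z hz.1)).1
  have hgle : ⟪ν, fderiv ℝ g y (z - y) - (g z - g y)⟫ ≤ M * (rg * ‖z - y‖ ^ 2) := by
    refine (real_inner_le_norm _ _).trans ?_
    rw [norm_sub_rev]
    exact mul_le_mul hνM (hg y hy.2 z hz.2) (norm_nonneg _) hM
  have hθ := hν (g z)
  rw [add_comm, ← zero_add (θ (g z)), ← EReal.coe_zero] at hθ
  rw [add_right_comm, ← EReal.coe_add]
  refine coe_add_le_coe_add hθ ?_
  rw [inner_add_left, ContinuousLinearMap.adjoint_inner_left, inner_gradient_left, add_mul]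
  rw [inner_sub_right] at hgle
  linarith

theorem exists_hasDerivAt_comp_eq_smul [CompleteSpace E] {F : E → E} {x : E}
    (hF : ContDiffAt ℝ 1 F x) (hF0 : F x = 0)
    (hF' : HasFDerivAt F (ContinuousLinearMap.id ℝ E) x) (s : E) :
    ∃ p : ℝ → E, p 0 = x ∧ HasDerivAt p s 0 ∧ ∀ᶠ t in 𝓝 0, F (p t) = t • s := by
  have hstrict : HasStrictFDerivAt F (ContinuousLinearEquiv.refl ℝ E : E →L[ℝ] E) x :=
    hF.hasStrictFDerivAt' hF' one_ne_zero
  have hline : HasDerivAt (fun t : ℝ => t • s) s 0 := by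
    simpa using (hasDerivAt_id (0 : ℝ)).smul_const s
  have hline0 : Tendsto (fun t : ℝ => t • s) (𝓝 0) (𝓝 (F x)) := by
    simpa [hF0] using hline.continuousAt.tendsto
  refine ⟨fun t => hstrict.localInverse F _ x (t • s), ?_, ?_,
    hline0.eventually hstrict.eventually_right_inverse⟩
  · simpa [hF0] using hstrict.localInverse_apply_image
  · have hinv := hstrict.to_localInverse.hasFDerivAt
    rw [hF0, ← zero_smul ℝ s] at hinv
    exact hinv.comp_hasDerivAt (0 : ℝ) hline

theorem norm_le_and_inner_nonneg_of_hasDerivAt {X Y : ℝ → E} {u y : E} {K : ℝ}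
    (hX : HasDerivAt X u 0) (hY : HasDerivAt Y y 0) (hX0 : X 0 = 0) (hY0 : Y 0 = 0)
    (h : ∀ᶠ t in 𝓝[>] 0, ‖X t‖ ≤ K * ‖Y t‖ ∧ 0 ≤ ⟪X t, Y t⟫) :
    ‖u‖ ≤ K * ‖y‖ ∧ 0 ≤ ⟪u, y⟫ := by
  have hXlim := hX.tendsto_slope_zero_right
  have hYlim := hY.tendsto_slope_zero_right
  simp only [zero_add, hX0, hY0, sub_zero] at hXlim hYlim
  constructor
  · refine le_of_tendsto_of_tendsto hXlim.norm (hYlim.norm.const_mul K) (h.mono fun t ht => ?_)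
    beta_reduce
    rw [norm_smul, norm_smul, mul_left_comm]
    exact mul_le_mul_of_nonneg_left ht.1 (norm_nonneg _)
  · refine ge_of_tendsto (hXlim.inner hYlim) (h.mono fun t ht => ?_)
    rw [inner_smul_left, inner_smul_right, conj_trivial, ← mul_assoc]
    exact mul_nonneg (mul_self_nonneg _) ht.2

theorem hasDerivAt_adjoint_fderiv_comp_smul [CompleteSpace E] {F : E → E} {x : E}
    (hF : ContDiffAt ℝ 1 F x) (hF' : HasFDerivAt F (ContinuousLinearMap.id ℝ E) x) {p : ℝ → E}
    (hp : ContinuousAt p 0) (hp0 : p 0 = x) (ν : E) :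
    HasDerivAt (fun t : ℝ => (fderiv ℝ F (p t)).adjoint (t • ν)) ν 0 := by
  have hcont : ContinuousAt (fun t => (fderiv ℝ F (p t)).adjoint ν) 0 := by
    have hfderiv : ContinuousAt (fderiv ℝ F) (p 0) := by
      rw [hp0]; exact hF.continuousAt_fderiv one_ne_zero
    exact ((ContinuousLinearMap.adjoint (𝕜 := ℝ)).continuous.continuousAt.comp
      (ContinuousAt.comp (f := p) hfderiv hp)).clm_apply continuousAt_const
  have hlim := hcont.tendsto
  rw [hp0, hF'.fderiv, ContinuousLinearMap.adjoint_id, ContinuousLinearMap.id_apply] at hlim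
  rw [hasDerivAt_iff_tendsto_slope_zero]
  refine (hlim.mono_left nhdsWithin_le_nhds).congr' ?_
  filter_upwards [self_mem_nhdsWithin] with t (ht : t ≠ 0)
  simp [smul_smul, ht]

end TiltStability

section Necessity

variable {E : Type*} [NormedAddCommGroup E] [InnerProductSpace ℝ E] [CompleteSpace E]
  {f : E → ℝ} {F : E → E} {x : E} {P : PolySublinear E}

theorem PolySublinear.exists_curve_mem_proxSubdiffOn (hf : ContDiffAt ℝ 2 f x)
    (hF : ContDiffAt ℝ 2 F x) (hF0 : F x = 0) (hF' : HasFDerivAt F (ContinuousLinearMap.id ℝ E) x)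
    (h0 : 0 ∈ subdiff P 0) {M : ℝ} (hM : 0 ≤ M) :
    ∃ R ≥ (0 : ℝ), ∃ U ∈ 𝓝 x, ∀ s ∈ P.zeroCone, ∀ ν ∈ subdiff P 0, ⟪ν, s⟫ = 0 → ‖ν‖ ≤ M →
      ∃ p v : ℝ → E, (p 0 = x ∧ HasDerivAt p s 0) ∧
        (v 0 = gradient f x ∧ HasDerivAt v (fderiv ℝ (gradient f) x s + ν) 0) ∧
        ∀ᶠ t in 𝓝[>] 0, v t ∈ proxSubdiffOn (fun y => f y + P (F y)) U R (p t) := by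
  obtain ⟨R, hR, U, hU, hprox⟩ := exists_add_adjoint_mem_proxSubdiffOn hf hF P hM
  refine ⟨R, hR, U, hU, fun s hs ν hν hνs hνM => ?_⟩
  have hF1 := hF.of_le one_le_two
  obtain ⟨p, rfl, hp, hpF⟩ := exists_hasDerivAt_comp_eq_smul hF1 hF0 hF' s
  refine ⟨p, fun t => gradient f (p t) + (fderiv ℝ F (p t)).adjoint (t • ν), ⟨rfl, hp⟩,
    ⟨by simp, ((hasFDerivAt_gradient hf).comp_hasDerivAt (0 : ℝ) hp).add
      (hasDerivAt_adjoint_fderiv_comp_smul hF1 hF' hp.continuousAt rfl ν)⟩, ?_⟩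
  filter_upwards [nhdsWithin_le_nhds (hp.continuousAt hU), nhdsWithin_le_nhds hpF,
    Ioo_mem_nhdsGT one_pos] with t htU htF ht
  have htν : t • ν ∈ subdiff P 0 := by
    simpa using convex_subdiff P 0 h0 hν (sub_nonneg.2 ht.2.le) ht.1.le (sub_add_cancel 1 t)
  refine hprox _ htU _ (htF ▸ PolySublinear.mem_subdiff_of_inner_eq_zero h0 htν
    (P.zeroCone.smul_mem ht.1.le hs) ?_) ?_
  · rw [inner_smul_left, inner_smul_right, hνs, mul_zero, mul_zero]
  · rw [norm_smul, Real.norm_of_nonneg ht.1.le]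
    exact (mul_le_of_le_one_left (norm_nonneg ν) ht.2.le).trans hνM

theorem IsTiltStable.exists_norm_sub_le (hf : ContDiffAt ℝ 2 f x) (hF : ContDiffAt ℝ 2 F x)
    (hF0 : F x = 0) (hF' : HasFDerivAt F (ContinuousLinearMap.id ℝ E) x)
    (h0 : 0 ∈ subdiff P 0)
    (h : IsTiltStable (fun y => f y + P (F y)) x (gradient f x)) :
    ∃ K : ℝ≥0, ∀ s₁ ∈ P.zeroCone, ∀ s₂ ∈ P.zeroCone, ∀ ν ∈ subdiff P 0, ⟪ν, s₁⟫ = 0 →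
      ‖s₁ - s₂‖ ≤ K * ‖fderiv ℝ (gradient f) x (s₁ - s₂) + ν‖ ∧
        0 ≤ ⟪s₁ - s₂, fderiv ℝ (gradient f) x (s₁ - s₂) + ν⟫ := by
  obtain ⟨K, hK⟩ := h.exists_eventually_norm_sub_le fun y =>
    EReal.add_ne_bot_iff.2 ⟨EReal.coe_ne_bot _, PolySublinear.apply_ne_bot⟩
  refine ⟨K, fun s₁ hs₁ s₂ hs₂ ν hν hνs => ?_⟩
  obtain ⟨R, hR, U, hU, hcurve⟩ :=
    PolySublinear.exists_curve_mem_proxSubdiffOn hf hF hF0 hF' h0 (norm_nonneg ν)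
  obtain ⟨p₁, v₁, ⟨hp₁0, hp₁⟩, ⟨hv₁0, hv₁⟩, hprox₁⟩ := hcurve s₁ hs₁ ν hν hνs le_rfl
  obtain ⟨p₂, v₂, ⟨hp₂0, hp₂⟩, ⟨hv₂0, hv₂⟩, hprox₂⟩ := hcurve s₂ hs₂ 0 h0 (inner_zero_left _)
    (norm_zero.trans_le (norm_nonneg ν))
  rw [add_zero] at hv₂
  rw [map_sub, sub_add_eq_add_sub]
  refine norm_le_and_inner_nonneg_of_hasDerivAt (hp₁.sub hp₂) (hv₁.sub hv₂)
    (by simp [hp₁0, hp₂0]) (by simp [hv₁0, hv₂0]) ?_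
  have htendsto : Tendsto (fun t => ((p₁ t, v₁ t), p₂ t, v₂ t)) (𝓝 0)
      (𝓝 ((x, gradient f x), x, gradient f x)) := by
    have := (hp₁.continuousAt.prodMk hv₁.continuousAt).prodMk
      (hp₂.continuousAt.prodMk hv₂.continuousAt)
    simpa only [ContinuousAt, hp₁0, hp₂0, hv₁0, hv₂0] using this
  filter_upwards [nhdsWithin_le_nhds (htendsto.eventually (hK U hU R hR)), hprox₁, hprox₂]
    with t ht ht₁ ht₂ using ht ht₁ ht₂

theorem IsTiltStable.inner_hess_pos (hf : ContDiffAt ℝ 2 f x) (hF : ContDiffAt ℝ 2 F x)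
    (hF0 : F x = 0) (hF' : HasFDerivAt F (ContinuousLinearMap.id ℝ E) x)
    (h0 : 0 ∈ subdiff P 0)
    (h : IsTiltStable (fun y => f y + P (F y)) x (gradient f x)) {u : E}
    (hu : u ∈ Submodule.span ℝ (P.zeroCone : Set E)) (hu0 : u ≠ 0) :
    0 < ⟪u, fderiv ℝ (gradient f) x u⟫ := by
  obtain ⟨K, hK⟩ := h.exists_norm_sub_le hf hF hF0 hF' h0
  set H := fderiv ℝ (gradient f) x
  have hnonneg : ∀ w ∈ Submodule.span ℝ (P.zeroCone : Set E), 0 ≤ ⟪w, H w⟫ := by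
    intro w hw
    obtain ⟨s₁, hs₁, s₂, hs₂, rfl⟩ := mem_span_cone_iff.1 hw
    simpa using (hK s₁ hs₁ s₂ hs₂ 0 h0 (inner_zero_left _)).2
  refine (hnonneg u hu).lt_of_ne' fun hHu => hu0 ?_
  have horth : ∀ s ∈ P.zeroCone, ⟪-H u, s⟫ = 0 := fun s hs => by
    rw [inner_neg_left, inner_eq_zero_of_inner_self_eq_zero (inner_fderiv_gradient_comm hf)
      hnonneg hu hHu (Submodule.subset_span hs), neg_zero]
  -- A multiple of `-H u` is a subgradient at `0`, which cancels the term `H u` in the estimate.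
  obtain ⟨τ, hτ, hτpos⟩ := ((PolySublinear.eventually_smul_mem_subdiff_zero h0
    fun s hs => (horth s hs).le).and self_mem_nhdsWithin).exists
  obtain ⟨s₁, hs₁, s₂, hs₂, rfl⟩ := mem_span_cone_iff.1 hu
  have hcone : ∀ s ∈ P.zeroCone, τ • s ∈ P.zeroCone := fun s hs =>
    P.zeroCone.smul_mem (le_of_lt hτpos) hs
  have hle := (hK _ (hcone s₁ hs₁) _ (hcone s₂ hs₂) _ hτ (by
    rw [inner_smul_left, horth _ (hcone s₁ hs₁), mul_zero])).1
  rw [← smul_sub, map_smul, smul_neg, add_neg_cancel, norm_zero, mul_zero, norm_le_zero_iff] at hle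
  exact (smul_eq_zero.1 hle).resolve_left (ne_of_gt hτpos)

theorem FullyStableSol.isTiltStable {n d : ℕ} {φ : Euc n → Euc d → EReal} {xb : Euc n}
    {wb : Euc d} {vb : Euc n} (h : FullyStableSol φ xb wb vb) {ψ : Euc n → EReal}
    (hψ : ∀ᶠ x in 𝓝 xb, φ x wb = ψ x) : IsTiltStable ψ xb vb := by
  obtain ⟨γ, hγ, W, hW, V, hV, ⟨σ, ⟨K, hLip⟩, hσ, hσb⟩, -⟩ := h
  have hwb := mem_of_mem_nhds hW
  have hLip' : LipschitzOnWith K (fun v => σ (wb, v)) V := fun v hv v' hv' => by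
    simpa [Prod.edist_eq] using hLip (x := (wb, v)) ⟨hwb, hv⟩ (y := (wb, v')) ⟨hwb, hv'⟩
  set U := {x | φ x wb = ψ x} ∩ closedBall xb γ
  have hU : U ∈ 𝓝 xb := inter_mem hψ (closedBall_mem_nhds xb hγ)
  have hσU : (fun v => σ (wb, v)) ⁻¹' U ∈ 𝓝 vb :=
    (hLip'.continuousOn.continuousAt hV).preimage_mem_nhds (by rwa [hσb])
  refine ⟨U, hU, V ∩ (fun v => σ (wb, v)) ⁻¹' U, inter_mem hV hσU, fun v => σ (wb, v), K,
    hLip'.mono inter_subset_left, hσb, fun v hv => ?_⟩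
  obtain ⟨-, hfin, hmin⟩ : σ (wb, v) ∈ argminLoc φ xb γ wb v := by
    rw [hσ wb hwb v hv.1]; rfl
  rw [← show φ (σ (wb, v)) wb = ψ (σ (wb, v)) from hv.2.1]
  refine ⟨hfin, fun y hy => ?_⟩
  rw [← show φ y wb = ψ y from hy.1]
  exact add_inner_le_of_sub_inner_le (hmin y (mem_closedBall_iff_norm.1 hy.2))

end Necessity

section Coercivity

variable {E : Type*} [NormedAddCommGroup E] [InnerProductSpace ℝ E]

theorem mul_norm_sq_le_of_le_apply_normalize {B : E →L[ℝ] E →L[ℝ] ℝ} {c : ℝ} {u : E} (hu : u ≠ 0)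
    (h : c ≤ B (‖u‖⁻¹ • u) (‖u‖⁻¹ • u)) : c * ‖u‖ ^ 2 ≤ B u u := by
  rwa [map_smul, map_smul, smul_apply, smul_smul, smul_eq_mul, ← mul_inv, ← sq, ← div_eq_inv_mul,
    le_div_iff₀ (by positivity)] at h

variable [FiniteDimensional ℝ E]

theorem exists_pos_forall_le_of_norm_eq_one {C : Set E} (hC : IsClosed C) {ψ : E → ℝ}
    (hψ : Continuous ψ) (hpos : ∀ u ∈ C, u ≠ 0 → 0 < ψ u) :
    ∃ c > (0 : ℝ), ∀ u ∈ C, ‖u‖ = 1 → c ≤ ψ u := by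
  have := FiniteDimensional.proper ℝ E
  obtain he | hne := (sphere (0 : E) 1 ∩ C).eq_empty_or_nonempty
  · exact ⟨1, one_pos, fun u hu hu1 =>
      (eq_empty_iff_forall_notMem.1 he u ⟨mem_sphere_zero_iff_norm.2 hu1, hu⟩).elim⟩
  · obtain ⟨u₀, hu₀, hmin⟩ :=
      ((isCompact_sphere (0 : E) 1).inter_right hC).exists_isMinOn hne hψ.continuousOn
    exact ⟨ψ u₀, hpos u₀ hu₀.2 (ne_zero_of_mem_unit_sphere ⟨u₀, hu₀.1⟩),
      fun u hu hu1 => hmin ⟨mem_sphere_zero_iff_norm.2 hu1, hu⟩⟩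

theorem exists_forall_mul_norm_sq_le (B : E →L[ℝ] E →L[ℝ] ℝ) {S : Submodule ℝ E}
    (hpos : ∀ u ∈ S, u ≠ 0 → 0 < B u u) : ∃ c > (0 : ℝ), ∀ u ∈ S, c * ‖u‖ ^ 2 ≤ B u u := by
  obtain ⟨c, hc, hle⟩ := exists_pos_forall_le_of_norm_eq_one S.closed_of_finiteDimensional
    (ψ := fun u => B u u) (by fun_prop) hpos
  refine ⟨c, hc, fun u hu => ?_⟩
  obtain rfl | hu0 := eq_or_ne u 0
  · simp
  · exact mul_norm_sq_le_of_le_apply_normalize hu0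
      (hle _ (S.smul_mem ‖u‖⁻¹ hu) (norm_smul_inv_norm hu0))

theorem PolySublinear.exists_forall_mul_norm_le_or {P : PolySublinear E} (h0 : 0 ∈ subdiff P 0)
    (B : E →L[ℝ] E →L[ℝ] ℝ) (hpos : ∀ u ∈ P.zeroCone, u ≠ 0 → 0 < B u u) :
    ∃ m > (0 : ℝ), ∀ s ∈ P.dom, m * ‖s‖ ≤ P.supp s ∨ m * ‖s‖ ^ 2 ≤ B s s := by
  obtain ⟨m, hm, hle⟩ := exists_pos_forall_le_of_norm_eq_one P.isClosed_dom
    (ψ := fun u => max (P.supp u) (B u u)) (P.continuous_supp.max (by fun_prop)) fun u hu hu0 => by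
      obtain hlt | heq := (supp_nonneg h0 hu).lt_or_eq
      · exact lt_max_of_lt_left hlt
      · exact lt_max_of_lt_right (hpos u (mem_zeroCone_iff.2 ⟨heq.ge, hu⟩) hu0)
  refine ⟨m, hm, fun s hs => ?_⟩
  obtain rfl | hs0 := eq_or_ne s 0
  · exact Or.inr (by simp)
  have hs' : ‖s‖⁻¹ • s ∈ P.dom := P.dom.smul_mem (by positivity) hs
  refine (le_max_iff.1 (hle _ hs' (norm_smul_inv_norm hs0))).imp (fun h => ?_)
    (mul_norm_sq_le_of_le_apply_normalize hs0)
  rwa [supp_smul (by positivity), ← div_eq_inv_mul, le_div_iff₀ (norm_pos_iff.2 hs0)] at h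

end Coercivity

section QuadraticGrowth

variable {E : Type*} [NormedAddCommGroup E] [InnerProductSpace ℝ E]

theorem isLittleO_sub_sub_fderiv_sub_fderiv_fderiv {f : E → ℝ} {x : E} (hf : ContDiffAt ℝ 2 f x) :
    (fun y => f y - f x - fderiv ℝ f x (y - x) - 2⁻¹ * fderiv ℝ (fderiv ℝ f) x (y - x) (y - x))
      =o[𝓝 x] fun y => ‖y - x‖ ^ 2 := by
  set B := fderiv ℝ (fderiv ℝ f) x
  have hsymm : ∀ u w, B u w = B w u := hf.isSymmSndFDerivAt (by simp)
  have hderiv : ∀ᶠ y in 𝓝 x, HasFDerivAt (fun y => f y - 2⁻¹ * B (y - x) (y - x))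
      (fderiv ℝ f y - B (y - x)) y := by
    filter_upwards [hf.eventually (by simp)] with y hy
    have hsub : HasFDerivAt (fun y => y - x) (ContinuousLinearMap.id ℝ E) y :=
      (hasFDerivAt_id y).sub_const x
    refine ((hy.differentiableAt two_ne_zero).hasFDerivAt.sub
      (((B.hasFDerivAt.comp y hsub).clm_apply hsub).const_mul 2⁻¹)).congr_fderiv ?_
    ext u
    simp [hsymm u, ← two_mul]
  have hB' : HasFDerivAt (fderiv ℝ f) B x :=
    ((hf.fderiv_right (m := 1) (by norm_num)).differentiableAt one_ne_zero).hasFDerivAt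
  refine Asymptotics.IsLittleO.of_bound fun ε hε => ?_
  obtain ⟨δ, hδ, hball⟩ := Metric.eventually_nhds_iff_ball.1
    (hderiv.and (hB'.isLittleO.def hε))
  filter_upwards [ball_mem_nhds x hδ] with y hy
  have hin : ∀ z ∈ closedBall x ‖y - x‖, z ∈ ball x δ := fun z hz =>
    (mem_closedBall.1 hz).trans_lt (by rwa [← dist_eq_norm])
  have hmv := (convex_closedBall x ‖y - x‖).norm_image_sub_le_of_norm_hasFDerivWithin_le'
    (φ := fderiv ℝ f x) (C := ε * ‖y - x‖)
    (fun z hz => (hball z (hin z hz)).1.hasFDerivWithinAt) (fun z hz => by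
      rw [sub_right_comm]
      exact (hball z (hin z hz)).2.trans
        (mul_le_mul_of_nonneg_left (mem_closedBall_iff_norm.1 hz) hε.le))
    (mem_closedBall_self (norm_nonneg _)) (mem_closedBall_iff_norm.2 le_rfl)
  rw [norm_pow, norm_norm, sq, ← mul_assoc]
  refine (congrArg norm ?_).trans_le hmv
  simp only [sub_self, map_zero, mul_zero, sub_zero]
  ring

theorem isLittleO_apply_self_sub_apply_self (B : E →L[ℝ] E →L[ℝ] ℝ) {F : E → E} {x : E}
    (hFx : F x = 0) (hF : HasFDerivAt F (ContinuousLinearMap.id ℝ E) x) :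
    (fun y => B (F y) (F y) - B (y - x) (y - x)) =o[𝓝 x] fun y => ‖y - x‖ ^ 2 := by
  have hlin : (fun y => F y - (y - x)) =o[𝓝 x] fun y => y - x := by
    simpa only [hFx, sub_zero, ContinuousLinearMap.id_apply] using hF.isLittleO
  have hFO : F =O[𝓝 x] fun y => y - x := by simpa only [hFx, sub_zero] using hF.isBigO_sub
  have hB : ∀ g h : E → E, (fun y => B (g y) (h y)) =O[𝓝 x] fun y => ‖g y‖ * ‖h y‖ := fun g h =>
    .of_bound ‖B‖ (.of_forall fun y => (B.le_opNorm₂ _ _).trans_eq (by simp [mul_assoc]))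
  refine (((hB _ F).trans_isLittleO (hlin.norm_norm.mul_isBigO hFO.norm_norm)).add
    ((hB (· - x) _).trans_isLittleO ((Asymptotics.isBigO_refl _ _).norm_norm.mul_isLittleO
      hlin.norm_norm))).congr (fun y => ?_) fun y => (sq _).symm
  simp only [map_sub, sub_apply]
  ring

theorem PolySublinear.eventually_lt_add_of_forall_pos [FiniteDimensional ℝ E]
    {P : PolySublinear E} {f : E → ℝ} {F : E → E} {x : E} (h0 : 0 ∈ subdiff P 0)
    (hf : ContDiffAt ℝ 2 f x) (hf' : fderiv ℝ f x = 0) (hFx : F x = 0)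
    (hF : HasFDerivAt F (ContinuousLinearMap.id ℝ E) x)
    (hpos : ∀ u ∈ P.zeroCone, u ≠ 0 → 0 < fderiv ℝ (fderiv ℝ f) x u u) :
    ∀ᶠ y in 𝓝[≠] x, (f x : EReal) < f y + P (F y) := by
  set B := fderiv ℝ (fderiv ℝ f) x
  obtain ⟨m, hm, hmin⟩ := PolySublinear.exists_forall_mul_norm_le_or h0 B hpos
  have htaylor := (isLittleO_sub_sub_fderiv_sub_fderiv_fderiv hf).def (c := m / 16) (by positivity)
  have hquadratic := (isLittleO_apply_self_sub_apply_self B hFx hF).def (c := m / 16)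
    (by positivity)
  have hlin := hF.isLittleO.def (c := 2⁻¹) (by positivity)
  have hsmall : ∀ᶠ y in 𝓝 x, ‖y - x‖ * (‖B‖ / 2 + m / 16) < m / 2 := by
    refine ContinuousAt.eventually_lt (by fun_prop) continuousAt_const ?_
    rw [sub_self, norm_zero, zero_mul]
    positivity
  filter_upwards [nhdsWithin_le_nhds (htaylor.and (hquadratic.and (hlin.and hsmall))),
    self_mem_nhdsWithin] with y ⟨hty, hqy, hly, hsy⟩ hyx
  by_cases hdom : F y ∉ P.dom
  · rw [apply_of_notMem hdom, EReal.coe_add_top]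
    exact EReal.coe_lt_top _
  push Not at hdom
  rw [apply_of_mem hdom, ← EReal.coe_add, EReal.coe_lt_coe_iff]
  have hu : 0 < ‖y - x‖ := norm_pos_iff.2 (sub_ne_zero.2 hyx)
  rw [hf', zero_apply, sub_zero, norm_pow, norm_norm, Real.norm_eq_abs, abs_le] at hty
  rw [norm_pow, norm_norm, Real.norm_eq_abs, abs_le] at hqy
  rw [hFx, sub_zero, ContinuousLinearMap.id_apply] at hly
  set u := y - x
  set s := F y
  have hlow : ‖u‖ / 2 ≤ ‖s‖ := by linarith [norm_sub_norm_le u s, norm_sub_rev u s]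
  obtain hsupp | hquad := hmin s hdom
  · have hBu : -(‖B‖ * ‖u‖ ^ 2) ≤ B u u := by
      rw [sq, ← mul_assoc]
      exact (abs_le.1 (B.le_opNorm₂ u u)).1
    nlinarith [mul_lt_mul_of_pos_right hsy hu]
  · have hms : m * (‖u‖ / 2) ^ 2 ≤ m * ‖s‖ ^ 2 := by gcongr
    linarith [supp_nonneg h0 hdom, hqy.2, mul_pos hm (pow_pos hu 2)]

end QuadraticGrowth

theorem norm_prodMk_le_add {Y X : Type*} [SeminormedAddCommGroup Y] [SeminormedAddCommGroup X]
    (y : Y) (x : X) : ‖(y, x)‖ ≤ ‖y‖ + ‖x‖ :=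
  max_le_add_of_nonneg (norm_nonneg _) (norm_nonneg _)

section GeneralizedEquation

variable {E : Type*} [NormedAddCommGroup E] [InnerProductSpace ℝ E]

theorem mul_norm_le_norm_sub_of_inner_nonpos {a m s : E} {c : ℝ} (hc : c * ‖s‖ ^ 2 ≤ ⟪a, s⟫)
    (hm : ⟪m, s⟫ ≤ 0) : c * ‖s‖ ≤ ‖a - m‖ := by
  obtain hs | hs := (norm_nonneg s).eq_or_lt
  · simp [← hs]
  · refine le_of_mul_le_mul_right ?_ hs
    calc c * ‖s‖ * ‖s‖ = c * ‖s‖ ^ 2 := by ring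
      _ ≤ ⟪a - m, s⟫ := by rw [inner_sub_left]; linarith
      _ ≤ ‖a - m‖ * ‖s‖ := real_inner_le_norm _ _

theorem PolySublinear.eventually_mem_zeroCone_of_neg_mem_subdiff {X : Type*} [TopologicalSpace X]
    {P : PolySublinear E} {M F : X → E} {q₀ : X} (h0 : 0 ∈ subdiff P 0) (hM : ContinuousAt M q₀)
    (hM0 : M q₀ = 0) : ∀ᶠ q in 𝓝 q₀, -M q ∈ subdiff P (F q) → F q ∈ P.zeroCone := by
  have hlim : Tendsto (fun q => -M q) (𝓝 q₀) (𝓝 0) := by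
    have := hM.neg.tendsto
    rwa [Pi.neg_apply, hM0, neg_zero] at this
  filter_upwards [hlim.eventually (P.eventually_mem_subdiff_of_mem_subdiff 0)] with q hq hMq
  exact (zero_mem_subdiff_iff h0).1 (hq _ hMq)

theorem PolySublinear.inner_sub_sub_nonneg {P : PolySublinear E} {v w s t : E}
    (hv : v ∈ subdiff P s) (hw : w ∈ subdiff P t) : 0 ≤ ⟪s - t, v - w⟫ :=
  inner_sub_sub_nonneg_of_le_of_le (hv t) (hw s) P.apply_ne_bot
    (by rw [apply_of_mem (mem_subdiff_iff.1 hv).1]; exact EReal.coe_ne_top _)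

variable {Y : Type*} [NormedAddCommGroup Y] [NormedSpace ℝ Y]

theorem mul_norm_le_of_approx {M' F' : Y × E →L[ℝ] E} {m s x : E} {y : Y} {c ε : ℝ} (hc0 : 0 ≤ c)
    (hε : 0 ≤ ε) (hm : ‖m - M' (y, x)‖ ≤ ε * ‖(y, x)‖) (hs : ‖s - F' (y, x)‖ ≤ ε * ‖(y, x)‖)
    (hF' : F' (0, x) = x) (hc : c * ‖s‖ ^ 2 ≤ ⟪M' (0, s), s⟫) (hms : ⟪m, s⟫ ≤ 0) :
    c * ‖x‖ ≤ (‖M'‖ + (‖M'‖ + c) * (‖F'‖ + ε) + ε) * ‖y‖ + ε * (‖M'‖ + c + 1) * ‖x‖ := by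
  have hyx : ε * ‖(y, x)‖ ≤ ε * (‖y‖ + ‖x‖) := by gcongr; exact norm_prodMk_le_add y x
  have he : ‖s - x‖ ≤ ‖F'‖ * ‖y‖ + ε * (‖y‖ + ‖x‖) := by
    have hsplit : s - x = F' (y, 0) + (s - F' (y, x)) := by
      have : F' (y, x) = F' (y, 0) + x := by
        conv_rhs => rw [← hF', ← map_add, Prod.mk_add_mk, add_zero, zero_add]
      rw [this]; abel
    have hy : ‖F' (y, 0)‖ ≤ ‖F'‖ * ‖y‖ := by simpa using F'.le_opNorm (y, 0)
    rw [hsplit]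
    exact (norm_add_le _ _).trans (add_le_add hy (hs.trans hyx))
  have hcs : c * ‖s‖ ≤ ‖M'‖ * (‖y‖ + ‖s - x‖) + ε * (‖y‖ + ‖x‖) := by
    have hsplit : M' (0, s) - m = M' (-y, s - x) - (m - M' (y, x)) := by
      rw [← sub_add, sub_add_eq_add_sub, ← map_add]; simp
    have hy : ‖M' (-y, s - x)‖ ≤ ‖M'‖ * (‖y‖ + ‖s - x‖) :=
      (M'.le_opNorm _).trans (by
        gcongr
        simpa only [norm_neg] using norm_prodMk_le_add (-y) (s - x))
    refine (mul_norm_le_norm_sub_of_inner_nonpos hc hms).trans ?_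
    rw [hsplit]
    exact (norm_sub_le _ _).trans (add_le_add hy (hm.trans hyx))
  have hx : c * ‖x‖ ≤ c * ‖s‖ + c * ‖s - x‖ := by
    rw [← mul_add]; gcongr; exact norm_le_norm_add_norm_sub s x
  have := mul_le_mul_of_nonneg_left he (add_nonneg (norm_nonneg M') hc0)
  linarith

theorem PolySublinear.exists_norm_sub_le_of_neg_mem_subdiff [FiniteDimensional ℝ E]
    {P : PolySublinear E} {M F : Y × E → E} {M' F' : Y × E →L[ℝ] E} {q₀ : Y × E}
    (h0 : 0 ∈ subdiff P 0) (hM : HasStrictFDerivAt M M' q₀) (hM0 : M q₀ = 0)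
    (hF : HasStrictFDerivAt F F' q₀) (hF' : ∀ u, F' (0, u) = u)
    (hpos : ∀ u ∈ Submodule.span ℝ (P.zeroCone : Set E), u ≠ 0 → 0 < ⟪M' (0, u), u⟫) :
    ∃ C : ℝ≥0, ∃ W ∈ 𝓝 q₀, ∀ q ∈ W, ∀ r ∈ W, -M q ∈ subdiff P (F q) → -M r ∈ subdiff P (F r) →
      ‖q.2 - r.2‖ ≤ C * ‖q.1 - r.1‖ := by
  obtain ⟨c, hc, hle⟩ := exists_forall_mul_norm_sq_le
    ((innerSL ℝ).comp (M'.comp (.inr ℝ Y E))) hpos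
  have hK : 0 < ‖M'‖ + c + 1 := by positivity
  obtain ⟨ε, hε, hεK⟩ : ∃ ε : ℝ≥0, 0 < ε ∧ ε * (‖M'‖ + c + 1) = c / 2 :=
    ⟨(c / 2 / (‖M'‖ + c + 1)).toNNReal, Real.toNNReal_pos.2 (by positivity), by
      rw [Real.coe_toNNReal _ (by positivity), div_mul_cancel₀ _ hK.ne']⟩
  obtain ⟨W₁, hW₁, happroxM⟩ := hM.approximates_deriv_on_nhds (.inr hε)
  obtain ⟨W₂, hW₂, happroxF⟩ := hF.approximates_deriv_on_nhds (.inr hε)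
  set D := ‖M'‖ + (‖M'‖ + c) * (‖F'‖ + ε) + ε
  refine ⟨(2 / c * D).toNNReal, W₁ ∩ W₂ ∩ {q | -M q ∈ subdiff P (F q) → F q ∈ P.zeroCone},
    inter_mem (inter_mem hW₁ hW₂)
      (eventually_mem_zeroCone_of_neg_mem_subdiff h0 hM.continuousAt hM0),
    fun q hq r hr hMq hMr => ?_⟩
  have hms : ⟪M q - M r, F q - F r⟫ ≤ 0 := by
    have := P.inner_sub_sub_nonneg hMq hMr
    rw [real_inner_comm, ← neg_sub', inner_neg_left] at this
    linarith
  have hspan : F q - F r ∈ Submodule.span ℝ (P.zeroCone : Set E) :=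
    sub_mem (Submodule.subset_span (hq.2 hMq)) (Submodule.subset_span (hr.2 hMr))
  have h := mul_norm_le_of_approx hc.le ε.coe_nonneg (happroxM q hq.1.1 r hr.1.1)
    (happroxF q hq.1.2 r hr.1.2) (hF' (q.2 - r.2)) (hle _ hspan) hms
  change _ ≤ D * _ + _ at h
  rw [hεK] at h
  rw [Real.coe_toNNReal _ (by positivity), div_mul_eq_mul_div,
    div_mul_eq_mul_div, le_div_iff₀ hc]
  linarith

end GeneralizedEquation

section PartialDerivatives

variable {Y X Z : Type*} [NormedAddCommGroup Y] [NormedSpace ℝ Y] [NormedAddCommGroup X]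
  [NormedSpace ℝ X] [NormedAddCommGroup Z] [NormedSpace ℝ Z]

theorem hasStrictFDerivAt_comp_prodMk {f : Y × X → Z} {f' : Y × X →L[ℝ] Z} {q : Y × X}
    (hf : HasStrictFDerivAt f f' q) :
    HasStrictFDerivAt (fun x => f (q.1, x)) (f' ∘L .inr ℝ Y X) q.2 :=
  hf.comp q.2 ((hasStrictFDerivAt_const q.1 q.2).prodMk (hasStrictFDerivAt_id q.2))

theorem fderiv_fderiv_comp_prodMk {k : Y × X → Z} {q₀ : Y × X} (hk : ContDiffAt ℝ 2 k q₀)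
    (u w : X) : fderiv ℝ (fderiv ℝ fun x => k (q₀.1, x)) q₀.2 u w =
      fderiv ℝ (fderiv ℝ k) q₀ (0, u) (0, w) := by
  have hx : Tendsto (fun x => (q₀.1, x)) (𝓝 q₀.2) (𝓝 q₀) :=
    (Continuous.prodMk_right q₀.1).tendsto q₀.2
  have hder : (fderiv ℝ fun x => k (q₀.1, x)) =ᶠ[𝓝 q₀.2]
      fun x => fderiv ℝ k (q₀.1, x) ∘L .inr ℝ Y X := by
    filter_upwards [hx.eventually (hk.eventually (by simp))] with x hkx
    exact (hasStrictFDerivAt_comp_prodMk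
      (hkx.hasStrictFDerivAt two_ne_zero)).hasFDerivAt.fderiv
  have hder' := (hasStrictFDerivAt_comp_prodMk
    ((hk.fderiv_right (m := 1) le_rfl).hasStrictFDerivAt one_ne_zero)).hasFDerivAt.clm_comp
    (hasFDerivAt_const (.inr ℝ Y X) q₀.2)
  rw [hder.fderiv_eq, hder'.fderiv]
  simp

end PartialDerivatives

section Multiplier

variable {E : Type*} [NormedAddCommGroup E] [InnerProductSpace ℝ E] [CompleteSpace E]

theorem PolySublinear.neg_mem_subdiff_of_isLocalMin_comp {P : PolySublinear E} {g : E → ℝ}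
    {F : E → E} {x : E} {g' : E →L[ℝ] ℝ} {A : E ≃L[ℝ] E} (hg : HasFDerivAt g g' x)
    (hF : HasStrictFDerivAt F (A : E →L[ℝ] E) x) (hdom : F x ∈ P.dom)
    (hmin : IsLocalMin (fun y => (g y : EReal) + P (F y)) x) :
    -(InnerProductSpace.toDual ℝ E).symm (g' ∘L (A.symm : E →L[ℝ] E)) ∈ subdiff P (F x) := by
  have hinv : hF.localInverse F A x (F x) = x := hF.localInverse_apply_image
  have hder : HasFDerivAt (hF.localInverse F A x) (A.symm : E →L[ℝ] E) (F x) :=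
    hF.to_localInverse.hasFDerivAt
  refine P.neg_mem_subdiff_of_isLocalMin (g := fun y => g (hF.localInverse F A x y)) ?_ hdom ?_
  · rw [hasGradientAt_iff_hasFDerivAt, LinearIsometryEquiv.apply_symm_apply]
    exact HasFDerivAt.comp (F x) (by rwa [hinv]) hder
  · have htends : Tendsto (hF.localInverse F A x) (𝓝 (F x)) (𝓝 x) := by
      simpa only [hinv] using hder.continuousAt.tendsto
    filter_upwards [htends.eventually hmin, hF.eventually_right_inverse] with y hy hFy
    rw [hFy] at hy
    simpa only [hinv] using hy

variable {Y : Type*} [NormedAddCommGroup Y] [NormedSpace ℝ Y] {k : Y × E → ℝ} {F : Y × E → E}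
  {q₀ : Y × E}

/-- The vector `μ` solving `∇ₓk = (DₓF)* μ` at `q`, where `k` and `F` are functions of a parameter
and of `x`. When `x` minimizes `k + P ∘ F` over its second variable, `-μ` is a subgradient of `P`.
If `DₓF` is not invertible the inverse, and hence the multiplier, is `0`. -/
def partialMultiplier (k : Y × E → ℝ) (F : Y × E → E) (q : Y × E) : E :=
  (InnerProductSpace.toDual ℝ E).symm
    ((fderiv ℝ k q ∘L .inr ℝ Y E) ∘L (fderiv ℝ F q ∘L .inr ℝ Y E).inverse)

theorem eventually_neg_partialMultiplier_mem_subdiff {P : PolySublinear E}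
    (hk : ContDiffAt ℝ 1 k q₀) (hF : ContDiffAt ℝ 1 F q₀)
    (hFx : (fderiv ℝ F q₀ ∘L .inr ℝ Y E).IsInvertible) :
    ∀ᶠ q in 𝓝 q₀, F q ∈ P.dom → IsLocalMin (fun x => (k (q.1, x) : EReal) + P (F (q.1, x))) q.2 →
      -partialMultiplier k F q ∈ subdiff P (F q) := by
  obtain ⟨A₀, hA₀⟩ := hFx
  have hinv : ∀ᶠ q in 𝓝 q₀, (fderiv ℝ F q ∘L .inr ℝ Y E).IsInvertible := by
    have hnhds : ∀ᶠ B in 𝓝 (fderiv ℝ F q₀ ∘L .inr ℝ Y E), B.IsInvertible := hA₀ ▸ A₀.nhds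
    have hcont : ContinuousAt (fun q => fderiv ℝ F q ∘L .inr ℝ Y E) q₀ :=
      (hF.continuousAt_fderiv one_ne_zero).clm_comp continuousAt_const
    exact hcont.eventually hnhds
  filter_upwards [hinv, hk.eventually (by simp), hF.eventually (by simp)]
    with q ⟨A, hA⟩ hkq hFq hdom hmin
  have hFA := hasStrictFDerivAt_comp_prodMk (hFq.hasStrictFDerivAt one_ne_zero)
  rw [← hA] at hFA
  rw [partialMultiplier, ← hA, ContinuousLinearMap.inverse_equiv]
  exact P.neg_mem_subdiff_of_isLocalMin_comp
    (hasStrictFDerivAt_comp_prodMk (hkq.hasStrictFDerivAt one_ne_zero)).hasFDerivAt hFA hdom hmin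

theorem exists_hasStrictFDerivAt_partialMultiplier (hk : ContDiffAt ℝ 2 k q₀)
    (hF : ContDiffAt ℝ 2 F q₀) (hkx : fderiv ℝ k q₀ ∘L .inr ℝ Y E = 0)
    (hFx : fderiv ℝ F q₀ ∘L .inr ℝ Y E = .id ℝ E) :
    ∃ M' : Y × E →L[ℝ] E, HasStrictFDerivAt (partialMultiplier k F) M' q₀ ∧
      ∀ u w, ⟪M' (0, u), w⟫ = fderiv ℝ (fderiv ℝ fun x => k (q₀.1, x)) q₀.2 u w := by
  have hk' : HasStrictFDerivAt (fderiv ℝ k) (fderiv ℝ (fderiv ℝ k) q₀) q₀ :=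
    (hk.fderiv_right (m := 1) le_rfl).hasStrictFDerivAt one_ne_zero
  have hinv : ContDiffAt ℝ 1 (fun q => (fderiv ℝ F q ∘L .inr ℝ Y E).inverse) q₀ := by
    refine ContDiffAt.comp (g := ContinuousLinearMap.inverse) q₀ ?_
      ((hF.fderiv_right le_rfl).clm_comp contDiffAt_const)
    rw [hFx]
    exact contDiffAt_map_inverse (.refl ℝ E)
  have hcomp := (hk'.clm_comp (hasStrictFDerivAt_const (.inr ℝ Y E) q₀)).clm_comp
    (hinv.hasStrictFDerivAt one_ne_zero)
  refine ⟨_, (InnerProductSpace.toDual ℝ E).symm.toContinuousLinearEquiv.hasStrictFDerivAt.comp q₀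
    hcomp, fun u w => ?_⟩
  rw [fderiv_fderiv_comp_prodMk hk, hkx, hFx, ContinuousLinearMap.inverse_id]
  simp

end Multiplier

section ParametricMinimization

theorem PolySublinear.lowerSemicontinuous {E : Type*} [NormedAddCommGroup E]
    [InnerProductSpace ℝ E] (P : PolySublinear E) : LowerSemicontinuous P := by
  intro s r hr
  by_cases hs : s ∈ P.dom
  · rw [apply_of_mem hs] at hr
    have hsupp := (continuous_coe_real_ereal.comp P.continuous_supp).continuousAt (x := s)
    filter_upwards [hsupp.eventually_const_lt hr] with s' hs'
    by_cases hdom : s' ∈ P.dom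
    · rwa [apply_of_mem hdom]
    · rw [apply_of_notMem hdom]; exact hs'.trans (EReal.coe_lt_top _)
  · rw [apply_of_notMem hs] at hr
    filter_upwards [P.isClosed_dom.isOpen_compl.mem_nhds hs] with s' hs'
    rwa [apply_of_notMem hs']

theorem PolySublinear.lowerSemicontinuousAt_coe_add_comp {X E : Type*} [TopologicalSpace X]
    [NormedAddCommGroup E] [InnerProductSpace ℝ E] (P : PolySublinear E) {k : X → ℝ} {F : X → E}
    {q : X} (hk : ContinuousAt k q) (hF : ContinuousAt F q) :
    LowerSemicontinuousAt (fun q => (k q : EReal) + P (F q)) q :=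
  (continuous_coe_real_ereal.continuousAt.comp hk).lowerSemicontinuousAt.add'
    ((P.lowerSemicontinuous (F q)).comp hF)
    (EReal.continuousAt_add (.inl (EReal.coe_ne_top _)) (.inl (EReal.coe_ne_bot _)))

theorem exists_closedBall_forall_isMinOn {Y X β : Type*} [TopologicalSpace Y] [MetricSpace X]
    [ProperSpace X] [LinearOrder β] [DenselyOrdered β] {J : Y × X → β} {p₀ : Y} {x₀ : X}
    {y : Y → X} {N : Set (Y × X)} (hJ : ∀ᶠ q in 𝓝 (p₀, x₀), LowerSemicontinuousAt J q)
    (hstrict : ∀ᶠ x in 𝓝[≠] x₀, J (p₀, x₀) < J (p₀, x)) (hy : Tendsto y (𝓝 p₀) (𝓝 x₀))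
    (hJy : ∀ r > J (p₀, x₀), ∀ᶠ p in 𝓝 p₀, J (p, y p) < r) (hN : N ∈ 𝓝 (p₀, x₀)) :
    ∃ γ > 0, ∃ U ∈ 𝓝 p₀, U ×ˢ closedBall x₀ γ ⊆ N ∧
      (∀ x ∈ closedBall x₀ γ, x ≠ x₀ → J (p₀, x₀) < J (p₀, x)) ∧
      ∀ p ∈ U, (∃ x ∈ closedBall x₀ γ, IsMinOn (fun x => J (p, x)) (closedBall x₀ γ) x) ∧
        ∀ x ∈ closedBall x₀ γ, IsMinOn (fun x => J (p, x)) (closedBall x₀ γ) x →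
          x ∈ ball x₀ γ ∧ J (p, x) ≤ J (p, y p) := by
  obtain ⟨U₁, hU₁, V₁, hV₁, hUV⟩ := mem_nhds_prod_iff.1 (inter_mem hN hJ)
  obtain ⟨γ, hγ, hball⟩ := nhds_basis_closedBall.mem_iff.1
    (inter_mem hV₁ (eventually_nhdsWithin_iff.1 hstrict))
  have hp₀ := mem_of_mem_nhds hU₁
  have hsphere : ∀ᶠ p in 𝓝 p₀, ∀ x ∈ sphere x₀ γ, J (p, y p) < J (p, x) := by
    refine (isCompact_sphere x₀ γ).eventually_forall_of_forall_eventually fun x hx => ?_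
    have hx' := sphere_subset_closedBall hx
    obtain ⟨r, hr, hrx⟩ := exists_between ((hball hx').2 (ne_of_mem_sphere hx hγ.ne'))
    filter_upwards [continuousAt_fst.eventually (hJy r hr),
      (hUV ⟨hp₀, (hball hx').1⟩).2 r hrx] with q hq₁ hq₂
    exact hq₁.trans hq₂
  refine ⟨γ, hγ, U₁ ∩ {p | (∀ x ∈ sphere x₀ γ, J (p, y p) < J (p, x)) ∧ y p ∈ closedBall x₀ γ},
    inter_mem hU₁ (hsphere.and (hy (closedBall_mem_nhds x₀ hγ))),
    fun q hq => (hUV ⟨hq.1.1, (hball hq.2).1⟩).1, fun x hx => (hball hx).2, fun p hp => ⟨?_, ?_⟩⟩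
  · refine LowerSemicontinuousOn.exists_isMinOn ⟨x₀, mem_closedBall_self hγ.le⟩
      (isCompact_closedBall x₀ γ) fun x hx => ?_
    have hlsc : LowerSemicontinuousAt J (p, x) := (hUV ⟨hp.1, (hball hx).1⟩).2
    exact (hlsc.comp (Continuous.prodMk_right p).continuousAt).lowerSemicontinuousWithinAt _
  · intro x hx hmin
    have hle : J (p, x) ≤ J (p, y p) := hmin hp.2.2
    refine ⟨(mem_closedBall.1 hx).lt_of_ne fun hxγ => ?_, hle⟩
    exact (hp.2.1 x (mem_sphere.2 hxγ)).not_ge hle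

end ParametricMinimization

section StableMinimizers

theorem PolySublinear.eventually_add_comp_prodMk_lt {Y E : Type*} [TopologicalSpace Y]
    [NormedAddCommGroup E] [InnerProductSpace ℝ E] {P : PolySublinear E} {k : Y × E → ℝ}
    {F : Y × E → E} {p₀ : Y} {x₀ : E} {y : Y → E} {r : EReal} (h0 : 0 ∈ subdiff P 0)
    (hk : ContinuousAt k (p₀, x₀)) (hy : Tendsto y (𝓝 p₀) (𝓝 x₀))
    (hFy : ∀ᶠ p in 𝓝 p₀, F (p, y p) = 0) (hr : (k (p₀, x₀) : EReal) < r) :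
    ∀ᶠ p in 𝓝 p₀, (k (p, y p) : EReal) + P (F (p, y p)) < r := by
  have hky : Tendsto (fun p => (k (p, y p) : EReal)) (𝓝 p₀) (𝓝 (k (p₀, x₀))) :=
    continuous_coe_real_ereal.continuousAt.tendsto.comp
      (hk.tendsto.comp (tendsto_id.prodMk_nhds hy))
  filter_upwards [hFy, hky.eventually_lt_const hr] with p hp hpr
  rwa [hp, apply_of_mem_zeroCone h0 P.zeroCone.zero_mem, add_zero]

variable {E : Type*} [NormedAddCommGroup E] [InnerProductSpace ℝ E] [FiniteDimensional ℝ E]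
  {Y : Type*} [NormedAddCommGroup Y] [NormedSpace ℝ Y] {P : PolySublinear E}
  {k : Y × E → ℝ} {F : Y × E → E} {p₀ : Y} {x₀ : E}

theorem PolySublinear.eventually_lt_add_comp_prodMk
    (h0 : 0 ∈ subdiff P 0) (hk : ContDiffAt ℝ 2 k (p₀, x₀)) (hF : DifferentiableAt ℝ F (p₀, x₀))
    (hF0 : F (p₀, x₀) = 0) (hkx : fderiv ℝ k (p₀, x₀) ∘L .inr ℝ Y E = 0)
    (hFx : fderiv ℝ F (p₀, x₀) ∘L .inr ℝ Y E = .id ℝ E)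
    (hpos : ∀ u ∈ P.zeroCone, u ≠ 0 → 0 < fderiv ℝ (fderiv ℝ fun x => k (p₀, x)) x₀ u u) :
    ∀ᶠ x in 𝓝[≠] x₀, (k (p₀, x₀) : EReal) < k (p₀, x) + P (F (p₀, x)) := by
  refine PolySublinear.eventually_lt_add_of_forall_pos (f := fun x => k (p₀, x))
    (F := fun x => F (p₀, x)) h0 (hk.comp x₀ (by fun_prop)) ?_ hF0 ?_ hpos
  · exact ((hk.differentiableAt two_ne_zero).hasFDerivAt.comp x₀
      (hasFDerivAt_prodMk_right p₀ x₀)).fderiv.trans hkx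
  · exact hFx ▸ hF.hasFDerivAt.comp x₀ (hasFDerivAt_prodMk_right p₀ x₀)

variable [CompleteSpace Y] {N : Set (Y × E)}

theorem PolySublinear.exists_closedBall_forall_neg_partialMultiplier_mem_subdiff
    (h0 : 0 ∈ subdiff P 0) (hk : ContDiffAt ℝ 2 k (p₀, x₀)) (hF : ContDiffAt ℝ 2 F (p₀, x₀))
    (hF0 : F (p₀, x₀) = 0) (hkx : fderiv ℝ k (p₀, x₀) ∘L .inr ℝ Y E = 0)
    (hFx : fderiv ℝ F (p₀, x₀) ∘L .inr ℝ Y E = .id ℝ E)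
    (hpos : ∀ u ∈ P.zeroCone, u ≠ 0 → 0 < fderiv ℝ (fderiv ℝ fun x => k (p₀, x)) x₀ u u)
    (hN : N ∈ 𝓝 (p₀, x₀)) :
    ∃ γ > 0, ∃ U ∈ 𝓝 p₀, U ×ˢ closedBall x₀ γ ⊆ N ∧
      (∀ x ∈ closedBall x₀ γ, x ≠ x₀ →
        (k (p₀, x₀) : EReal) + P (F (p₀, x₀)) < k (p₀, x) + P (F (p₀, x))) ∧
      ∀ p ∈ U, (∃ x ∈ closedBall x₀ γ,
          IsMinOn (fun x => (k (p, x) : EReal) + P (F (p, x))) (closedBall x₀ γ) x) ∧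
        ∀ x ∈ closedBall x₀ γ,
          IsMinOn (fun x => (k (p, x) : EReal) + P (F (p, x))) (closedBall x₀ γ) x →
          -partialMultiplier k F (p, x) ∈ subdiff P (F (p, x)) := by
  have hP0 : P 0 = 0 := apply_of_mem_zeroCone h0 P.zeroCone.zero_mem
  have hFs := hF.hasStrictFDerivAt two_ne_zero
  have hinv : (fderiv ℝ F (p₀, x₀) ∘L .inr ℝ Y E).IsInvertible := ⟨.refl ℝ E, hFx.symm⟩
  have hJ : ∀ᶠ q in 𝓝 (p₀, x₀), LowerSemicontinuousAt (fun q => (k q : EReal) + P (F q)) q := by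
    filter_upwards [hk.eventually (by simp), hF.eventually (by simp)] with q hkq hFq
    exact P.lowerSemicontinuousAt_coe_add_comp hkq.continuousAt hFq.continuousAt
  have hJ₀ : (k (p₀, x₀) : EReal) + P (F (p₀, x₀)) = k (p₀, x₀) := by rw [hF0, hP0, add_zero]
  have hgrowth := PolySublinear.eventually_lt_add_comp_prodMk h0 hk hFs.differentiableAt hF0 hkx
    hFx hpos
  rw [← hJ₀] at hgrowth
  have hy := hFs.tendsto_implicitFunctionOfProdDomain hinv
  have hFy := hFs.eventually_apply_implicitFunctionOfProdDomain hinv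
  set y := hFs.implicitFunctionOfProdDomain hinv
  obtain ⟨γ, hγ, U, hU, hUN, hlt, hmin⟩ := exists_closedBall_forall_isMinOn hJ hgrowth hy
    (fun r hr => PolySublinear.eventually_add_comp_prodMk_lt h0 hk.continuousAt hy
      (hFy.mono fun _ h => h.trans hF0) (hJ₀ ▸ hr))
    (inter_mem hN (eventually_neg_partialMultiplier_mem_subdiff (P := P)
      (hk.of_le one_le_two) (hF.of_le one_le_two) hinv))
  refine ⟨γ, hγ, U ∩ {p | F (p, y p) = F (p₀, x₀)}, inter_mem hU hFy,
    fun q hq => (hUN ⟨hq.1.1, hq.2⟩).1, hlt, fun p hp => ⟨(hmin p hp.1).1, fun x hx hxmin => ?_⟩⟩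
  obtain ⟨hball, hle⟩ := (hmin p hp.1).2 x hx hxmin
  refine (hUN ⟨hp.1, hx⟩).2 ?_ (hxmin.isLocalMin (mem_of_superset (isOpen_ball.mem_nhds hball)
    ball_subset_closedBall))
  by_contra hdom
  rw [show F (p, y p) = 0 from hp.2.trans hF0, hP0, apply_of_notMem hdom] at hle
  simp at hle

theorem PolySublinear.exists_lipschitzOnWith_isMinOn (h0 : 0 ∈ subdiff P 0)
    (hk : ContDiffAt ℝ 2 k (p₀, x₀)) (hF : ContDiffAt ℝ 2 F (p₀, x₀)) (hF0 : F (p₀, x₀) = 0)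
    (hkx : fderiv ℝ k (p₀, x₀) ∘L .inr ℝ Y E = 0)
    (hFx : fderiv ℝ F (p₀, x₀) ∘L .inr ℝ Y E = .id ℝ E)
    (hpos : ∀ u ∈ Submodule.span ℝ (P.zeroCone : Set E), u ≠ 0 →
      0 < fderiv ℝ (fderiv ℝ fun x => k (p₀, x)) x₀ u u) (hN : N ∈ 𝓝 (p₀, x₀)) :
    ∃ γ > 0, ∃ U ∈ 𝓝 p₀, U ×ˢ closedBall x₀ γ ⊆ N ∧ ∃ σ : Y → E, σ p₀ = x₀ ∧
      (∃ K, LipschitzOnWith K σ U) ∧ (∃ K, LipschitzOnWith K (fun p => k (p, σ p)) U) ∧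
      ∀ p ∈ U, (k (p, σ p) : EReal) + P (F (p, σ p)) = k (p, σ p) ∧
        {x ∈ closedBall x₀ γ |
          IsMinOn (fun x => (k (p, x) : EReal) + P (F (p, x))) (closedBall x₀ γ) x} = {σ p} := by
  obtain ⟨M', hM', hM'eq⟩ := exists_hasStrictFDerivAt_partialMultiplier hk hF hkx hFx
  have hM0 : partialMultiplier k F (p₀, x₀) = 0 := by simp [partialMultiplier, hkx]
  have hkLip := (hk.hasStrictFDerivAt two_ne_zero).exists_lipschitzOnWith
  obtain ⟨Kk, Wk, hWk, hkLip⟩ := hkLip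
  obtain ⟨C, W, hW, hC⟩ := P.exists_norm_sub_le_of_neg_mem_subdiff h0 hM' hM0
    (hF.hasStrictFDerivAt two_ne_zero) (fun u => congr($hFx u))
    (fun u hu hu0 => (hM'eq u u).symm ▸ hpos u hu hu0)
  obtain ⟨γ, hγ, U, hU, hUN, hlt, hmin⟩ :=
    P.exists_closedBall_forall_neg_partialMultiplier_mem_subdiff h0 hk hF hF0 hkx hFx
      (fun u hu => hpos u (Submodule.subset_span hu)) (inter_mem hN (inter_mem (inter_mem hW hWk)
        (P.eventually_mem_zeroCone_of_neg_mem_subdiff (F := F) h0 hM'.continuousAt hM0)))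
  choose! σ hσ hσmin using fun p hp => (hmin p hp).1
  have hdist : ∀ p ∈ U, ∀ p' ∈ U, ∀ x ∈ closedBall x₀ γ,
      IsMinOn (fun x => (k (p', x) : EReal) + P (F (p', x))) (closedBall x₀ γ) x →
      ‖σ p - x‖ ≤ C * ‖p - p'‖ := fun p hp p' hp' x hx hxmin =>
    hC _ (hUN ⟨hp, hσ p hp⟩).2.1.1 _ (hUN ⟨hp', hx⟩).2.1.1 ((hmin p hp).2 _ (hσ p hp) (hσmin p hp))
      ((hmin p' hp').2 x hx hxmin)
  have hσLip : LipschitzOnWith C σ U := .of_dist_le_mul fun p hp p' hp' => by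
    simpa only [dist_eq_norm] using hdist p hp p' hp' _ (hσ p' hp') (hσmin p' hp')
  refine ⟨γ, hγ, U, hU, fun q hq => (hUN hq).1, σ, ?_, ⟨C, hσLip⟩, ⟨_, hkLip.comp
    (LipschitzWith.id.lipschitzOnWith.prodMk hσLip) fun p hp => (hUN ⟨hp, hσ p hp⟩).2.1.2⟩,
      fun p hp => ⟨?_, ?_⟩⟩
  · have hp₀ := mem_of_mem_nhds hU
    by_contra hne
    exact (hlt _ (hσ p₀ hp₀) hne).not_ge (hσmin p₀ hp₀ (mem_closedBall_self hγ.le))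
  · rw [apply_of_mem_zeroCone h0 ((hUN ⟨hp, hσ p hp⟩).2.2
      ((hmin p hp).2 _ (hσ p hp) (hσmin p hp))), add_zero]
  · refine eq_singleton_iff_unique_mem.2 ⟨⟨hσ p hp, hσmin p hp⟩, fun x hx => ?_⟩
    have := hdist p hp p hp x hx.1 hx.2
    rw [sub_self, norm_zero, mul_zero, norm_le_zero_iff, sub_eq_zero] at this
    exact this.symm

end StableMinimizers

section TiltedObjective

variable {Y E : Type*} [NormedAddCommGroup E] [InnerProductSpace ℝ E] {f : E × Y → ℝ} {x v : E}
  {w : Y}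

/-- The objective `f(x,w) - ⟨v,x⟩`, as a function of the parameter `(w,v)` and of `x`. -/
def tilted (f : E × Y → ℝ) (q : (Y × E) × E) : ℝ := f (q.2, q.1.1) - ⟪q.1.2, q.2⟫

theorem fderiv_tilted_apply (hf : DifferentiableAt ℝ (fun x => f (x, w)) x) :
    fderiv ℝ (fun x => tilted f ((w, v), x)) x = fderiv ℝ (fun x => f (x, w)) x - innerSL ℝ v :=
  (hf.hasFDerivAt.sub (innerSL ℝ v).hasFDerivAt).fderiv

variable [NormedAddCommGroup Y] [NormedSpace ℝ Y]

theorem contDiffAt_tilted {m : WithTop ℕ∞} (hf : ContDiffAt ℝ m f (x, w)) :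
    ContDiffAt ℝ m (tilted f) ((w, v), x) :=
  (hf.comp ((w, v), x) (by fun_prop)).sub
    ((contDiffAt_snd.comp _ contDiffAt_fst).inner ℝ contDiffAt_snd)

theorem fderiv_tilted_comp_inr [CompleteSpace E] (hf : ContDiffAt ℝ 1 f (x, w))
    (hfx : gradient (fun x => f (x, w)) x = v) :
    fderiv ℝ (tilted f) ((w, v), x) ∘L .inr ℝ (Y × E) E = 0 := by
  have hfx' : DifferentiableAt ℝ (fun x => f (x, w)) x :=
    (hf.comp x (by fun_prop)).differentiableAt one_ne_zero
  have hpartial := (hasStrictFDerivAt_comp_prodMk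
    ((contDiffAt_tilted (v := v) hf).hasStrictFDerivAt one_ne_zero)).hasFDerivAt.fderiv
  rw [← hpartial, fderiv_tilted_apply hfx', ← hfx]
  ext u
  simp

theorem fderiv_fderiv_tilted (hf : ContDiffAt ℝ 2 f (x, w)) :
    fderiv ℝ (fderiv ℝ fun x => tilted f ((w, v), x)) x =
      fderiv ℝ (fderiv ℝ fun x => f (x, w)) x := by
  have hf' : ContDiffAt ℝ 2 (fun x => f (x, w)) x := hf.comp x (by fun_prop)
  have htilted : (fderiv ℝ fun x => tilted f ((w, v), x)) =ᶠ[𝓝 x]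
      fun x => fderiv ℝ (fun x => f (x, w)) x - innerSL ℝ v := by
    filter_upwards [hf'.eventually (by simp)] with y hy
    exact fderiv_tilted_apply (hy.differentiableAt two_ne_zero)
  rw [htilted.fderiv_eq, fderiv_sub_const]

end TiltedObjective

section FullStability

variable {n dd : ℕ} {φ : Euc n → Euc dd → EReal} {xb : Euc n} {wb : Euc dd} {vb : Euc n}

theorem argminLoc_eq_singleton_and_infLoc_eq {γ r : ℝ} {w : Euc dd} {v s : Euc n}
    (hs : {x ∈ closedBall xb γ |
      IsMinOn (fun x => φ x w - (⟪v, x⟫ : ℝ)) (closedBall xb γ) x} = {s})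
    (hr : φ s w - (⟪v, s⟫ : ℝ) = r) : argminLoc φ xb γ w v = {s} ∧ infLoc φ xb γ w v = r := by
  obtain ⟨hsball, hsmin⟩ : s ∈ {x ∈ closedBall xb γ | _} := hs ▸ mem_singleton s
  constructor
  · refine eq_singleton_iff_unique_mem.2 ⟨⟨mem_closedBall_iff_norm.1 hsball, fun htop => ?_,
      fun y hy => hsmin (mem_closedBall_iff_norm.2 hy)⟩, fun x hx => ?_⟩
    · simp [htop] at hr
    · rw [← mem_singleton_iff, ← hs]
      exact ⟨mem_closedBall_iff_norm.2 hx.1, fun y hy => hx.2.2 y (mem_closedBall_iff_norm.1 hy)⟩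
  · rw [← hr]
    exact le_antisymm (iInf₂_le s (mem_closedBall_iff_norm.1 hsball))
      (le_iInf₂ fun y hy => hsmin (mem_closedBall_iff_norm.2 hy))

theorem coe_add_sub_coe (a r : ℝ) (b : EReal) :
    (a : EReal) + b - r = ((a - r : ℝ) : EReal) + b := by
  rw [EReal.coe_sub, sub_eq_add_neg, sub_eq_add_neg, add_right_comm]

variable {f : Euc n × Euc dd → ℝ} {F : Euc n × Euc dd → Euc n} {P : PolySublinear (Euc n)}

theorem fullyStableSol_of_forall_pos
    (hφ : ∀ᶠ q in 𝓝 (xb, wb), φ q.1 q.2 = f q + P (F q)) (h0 : 0 ∈ subdiff P 0)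
    (hf : ContDiffAt ℝ 2 f (xb, wb)) (hF : ContDiffAt ℝ 2 F (xb, wb)) (hF0 : F (xb, wb) = 0)
    (hFx : fderiv ℝ (fun x => F (x, wb)) xb = .id ℝ (Euc n))
    (hfx : gradient (fun x => f (x, wb)) xb = vb)
    (hpos : ∀ u ∈ Submodule.span ℝ (P.zeroCone : Set (Euc n)), u ≠ 0 →
      0 < fderiv ℝ (fderiv ℝ fun x => f (x, wb)) xb u u) :
    FullyStableSol φ xb wb vb := by
  set F' : (Euc dd × Euc n) × Euc n → Euc n := fun q => F (q.2, q.1.1)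
  have hswap : ContDiff ℝ 2 fun q : (Euc dd × Euc n) × Euc n => (q.2, q.1.1) := by fun_prop
  have hF' : ContDiffAt ℝ 2 F' ((wb, vb), xb) := hF.comp ((wb, vb), xb) hswap.contDiffAt
  have hF'x : fderiv ℝ F' ((wb, vb), xb) ∘L .inr ℝ _ (Euc n) = .id ℝ (Euc n) := by
    rw [← hFx]
    exact (hasStrictFDerivAt_comp_prodMk
      (hF'.hasStrictFDerivAt two_ne_zero)).hasFDerivAt.fderiv.symm
  obtain ⟨γ, hγ, U, hU, hUN, σ, hσ₀, ⟨K, hσ⟩, ⟨K', hμ⟩, hσmin⟩ :=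
    PolySublinear.exists_lipschitzOnWith_isMinOn h0 (contDiffAt_tilted hf) hF' hF0
      (fderiv_tilted_comp_inr (hf.of_le one_le_two) hfx) hF'x
      (fun u hu hu0 => fderiv_fderiv_tilted hf ▸ hpos u hu hu0)
      ((hswap.continuous.tendsto _).eventually hφ)
  obtain ⟨W, hW, V, hV, hWV⟩ := mem_nhds_prod_iff.1 hU
  have hloc : ∀ w ∈ W, ∀ v ∈ V, argminLoc φ xb γ w v = {σ (w, v)} ∧
      infLoc φ xb γ w v = tilted f ((w, v), σ (w, v)) := fun w hw v hv => by
    have hφf : EqOn (fun x => φ x w - (⟪v, x⟫ : ℝ))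
        (fun x => (tilted f ((w, v), x) : EReal) + P (F' ((w, v), x))) (closedBall xb γ) :=
        fun x hx => by
      have : φ x w = f (x, w) + P (F (x, w)) := hUN (a := ((w, v), x)) ⟨hWV ⟨hw, hv⟩, hx⟩
      simp only [this, coe_add_sub_coe, tilted, F']
    obtain ⟨hval, hset⟩ := hσmin (w, v) (hWV ⟨hw, hv⟩)
    have hball : σ (w, v) ∈ closedBall xb γ := ((hset ▸ mem_singleton _ :) : _ ∈ {x | _ ∧ _}).1
    refine argminLoc_eq_singleton_and_infLoc_eq ?_ ((hφf hball).trans hval)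
    rw [← hset]
    ext x
    exact and_congr_right fun hx => forall₂_congr fun y hy => by
      simp only [mem_ofPred_eq, hφf hx, hφf hy]
  exact ⟨γ, hγ, W, hW, V, hV, ⟨σ, ⟨K, hσ.mono hWV⟩, fun w hw v hv => (hloc w hw v hv).1, hσ₀⟩,
    _, ⟨K', hμ.mono hWV⟩, fun w hw v hv => (hloc w hw v hv).2⟩

end FullStability

section LinearReduction

variable {E E' : Type*} [NormedAddCommGroup E] [InnerProductSpace ℝ E] [NormedAddCommGroup E']
  [InnerProductSpace ℝ E'] [CompleteSpace E] [CompleteSpace E']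

/-- `R` is a right inverse of `A` modulo the orthogonal complement of `S`. -/
def IsRightInvOn (A : E' →L[ℝ] E) (R : E →L[ℝ] E') (S : Set E) : Prop :=
  ∀ c ∈ S, ∀ y, ⟪c, A (R y)⟫ = ⟪c, y⟫

theorem exists_isRightInvOn_of_disjoint {A : E' →L[ℝ] E} {S : Submodule ℝ E}
    [FiniteDimensional ℝ S] (h : Disjoint S (ContinuousLinearMap.adjoint A).ker) :
    ∃ R : E →L[ℝ] E', IsRightInvOn A R S := by
  set T : E' →L[ℝ] S := S.orthogonalProjectionOnto ∘L A
  have hT : ∀ (c : S) (x : E'), ⟪c, T x⟫ = ⟪(c : E), A x⟫ := fun c x =>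
    Submodule.inner_orthogonalProjectionOnto_eq_of_mem_left c (A x)
  have hrange : T.range = ⊤ := by
    rw [← Submodule.orthogonal_eq_bot_iff, Submodule.eq_bot_iff]
    intro c hc
    have hker : (c : E) ∈ (ContinuousLinearMap.adjoint A).ker := by
      refine LinearMap.mem_ker.2 (ext_inner_right ℝ fun x => ?_)
      rw [inner_zero_left, ContinuousLinearMap.coe_coe, ContinuousLinearMap.adjoint_inner_left,
        ← hT, real_inner_comm]
      exact hc (T x) ⟨x, rfl⟩
    exact Subtype.ext (Submodule.disjoint_def.1 h c c.2 hker)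
  obtain ⟨g, hg⟩ := T.exists_rightInverse_of_surjective hrange
  refine ⟨g ∘L S.orthogonalProjectionOnto, fun c hc y => ?_⟩
  calc ⟪c, A (g (S.orthogonalProjectionOnto y))⟫
      = ⟪(⟨c, hc⟩ : S), T (g (S.orthogonalProjectionOnto y))⟫ := (hT ⟨c, hc⟩ _).symm
    _ = ⟪(⟨c, hc⟩ : S), S.orthogonalProjectionOnto y⟫ :=
        congrArg _ (congrArg (fun L : S →L[ℝ] S => L (S.orthogonalProjectionOnto y)) hg)
    _ = ⟪c, y⟫ := Submodule.inner_orthogonalProjectionOnto_eq_of_mem_left _ y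

variable {P : PolySublinear E} {A : E' →L[ℝ] E} {R : E →L[ℝ] E'}

theorem PolySublinear.mem_span_zeroCone_comap (hR : IsRightInvOn A R P.generators) {u : E'} :
    u ∈ Submodule.span ℝ ((P.comap A).zeroCone : Set E') ↔
      A u ∈ Submodule.span ℝ (P.zeroCone : Set E) := by
  simp only [mem_span_cone_iff, mem_zeroCone_comap]
  constructor
  · rintro ⟨x, hx, y, hy, rfl⟩
    exact ⟨A x, hx, A y, hy, map_sub A x y⟩
  · rintro ⟨s, hs, t, ht, hst⟩
    refine ⟨R s + (u - R (A u)), fun c hc => ?_, R t, fun c hc => ?_, ?_⟩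
    · simpa [inner_add_right, inner_sub_right, hR c hc] using hs c hc
    · simpa [hR c hc] using ht c hc
    · rw [hst, map_sub]
      abel

end LinearReduction

section Straightening

variable {X Y E : Type*} [NormedAddCommGroup X] [NormedSpace ℝ X] [NormedAddCommGroup E]
  [NormedSpace ℝ E] {Φ : X × Y → E} {A : X →L[ℝ] E}
  {R : E →L[ℝ] X} {xb x : X} {wb : Y} {q : X × Y}

/-- A nonlinear change of variables in `x`, tangent to the identity at `(xb, wb)`. If `R` is a
right inverse of the partial derivative `A` of `Φ`, it satisfies
`A (straighten Φ A R xb wb q) = Φ q - Φ (xb, wb)`. -/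
def straighten (Φ : X × Y → E) (A : X →L[ℝ] E) (R : E →L[ℝ] X) (xb : X) (wb : Y) (q : X × Y) : X :=
  (q.1 - xb) + R (Φ q - Φ (xb, wb) - A (q.1 - xb))

theorem straighten_self : straighten Φ A R xb wb (xb, wb) = 0 := by simp [straighten]

theorem fderiv_straighten (hΦ : HasFDerivAt (fun x => Φ (x, wb)) A xb) :
    fderiv ℝ (fun x => straighten Φ A R xb wb (x, wb)) xb = .id ℝ X := by
  have hsub : HasFDerivAt (fun x => x - xb) (.id ℝ X) xb := (hasFDerivAt_id xb).sub_const xb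
  refine (hsub.add (R.hasFDerivAt.comp xb ((hΦ.sub_const _).sub
    (A.hasFDerivAt.comp xb hsub)))).fderiv.trans ?_
  ext
  simp

theorem contDiffAt_straighten [NormedAddCommGroup Y] [NormedSpace ℝ Y] {k : WithTop ℕ∞}
    (hΦ : ContDiffAt ℝ k Φ q) :
    ContDiffAt ℝ k (straighten Φ A R xb wb) q := by
  unfold straighten
  fun_prop

end Straightening

theorem PolySublinear.comap_straighten {X Y E : Type*} [NormedAddCommGroup X]
    [InnerProductSpace ℝ X] [CompleteSpace X] [NormedAddCommGroup E] [InnerProductSpace ℝ E]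
    [CompleteSpace E] {P : PolySublinear E} {Φ : X × Y → E} {A : X →L[ℝ] E} {R : E →L[ℝ] X}
    (hR : IsRightInvOn A R P.generators) (xb : X) (wb : Y) (q : X × Y) :
    P.comap A (straighten Φ A R xb wb q) = P (Φ q - Φ (xb, wb)) := by
  rw [comap_apply]
  refine apply_eq_of_inner_eq fun c hc => ?_
  simp only [straighten, map_add, inner_add_right, hR c hc, inner_sub_right]
  ring

theorem gradient_add_const {E : Type*} [NormedAddCommGroup E] [InnerProductSpace ℝ E]
    [CompleteSpace E] (g : E → ℝ) (r : ℝ) : gradient (fun x => g x + r) = gradient g := by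
  ext1 x
  rw [gradient, gradient, fderiv_add_const]

theorem gradient_add_inner {X E : Type*} [NormedAddCommGroup X] [InnerProductSpace ℝ X]
    [CompleteSpace X] [NormedAddCommGroup E] [InnerProductSpace ℝ E] [CompleteSpace E] {g : X → ℝ}
    {G : X → E} {x : X} (hg : DifferentiableAt ℝ g x) (hG : DifferentiableAt ℝ G x) (lam : E) :
    gradient (fun x => g x + ⟪lam, G x⟫) x =
      gradient g x + ContinuousLinearMap.adjoint (fderiv ℝ G x) lam := by
  refine ext_inner_right ℝ fun u => ?_
  have hderiv := hg.hasFDerivAt.add ((innerSL ℝ lam).hasFDerivAt.comp x hG.hasFDerivAt)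
  rw [inner_add_left, inner_gradient_left, inner_gradient_left,
    ContinuousLinearMap.adjoint_inner_left]
  exact congrArg (fun L : X →L[ℝ] ℝ => L u) hderiv.fderiv

theorem fullyStableSol_iff_forall_pos {n dd : ℕ} {φ : Euc n → Euc dd → EReal} {xb vb : Euc n}
    {wb : Euc dd} {f : Euc n × Euc dd → ℝ} {F : Euc n × Euc dd → Euc n} {P : PolySublinear (Euc n)}
    (hφ : ∀ᶠ q in 𝓝 (xb, wb), φ q.1 q.2 = f q + P (F q)) (h0 : 0 ∈ subdiff P 0)
    (hf : ContDiffAt ℝ 2 f (xb, wb)) (hF : ContDiffAt ℝ 2 F (xb, wb)) (hF0 : F (xb, wb) = 0)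
    (hFx : fderiv ℝ (fun x => F (x, wb)) xb = .id ℝ (Euc n))
    (hfx : gradient (fun x => f (x, wb)) xb = vb) :
    FullyStableSol φ xb wb vb ↔ ∀ u ∈ Submodule.span ℝ (P.zeroCone : Set (Euc n)), u ≠ 0 →
      0 < ⟪u, fderiv ℝ (gradient fun x => f (x, wb)) xb u⟫ := by
  have hf' : ContDiffAt ℝ 2 (fun x => f (x, wb)) xb := hf.comp xb (by fun_prop)
  have hF' : ContDiffAt ℝ 2 (fun x => F (x, wb)) xb := hF.comp xb (by fun_prop)
  have hslice : Tendsto (fun x => (x, wb)) (𝓝 xb) (𝓝 (xb, wb)) :=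
    (Continuous.prodMk_left wb).tendsto xb
  constructor
  · intro hstable u hu hu0
    have htilt := hstable.isTiltStable (hslice.eventually hφ)
    rw [← hfx] at htilt
    exact htilt.inner_hess_pos hf' hF' hF0
      (hFx ▸ (hF'.differentiableAt two_ne_zero).hasFDerivAt) h0 hu hu0
  · refine fun hpos => fullyStableSol_of_forall_pos hφ h0 hf hF hF0 hFx hfx fun u hu hu0 => ?_
    rw [← inner_fderiv_gradient hf', real_inner_comm]
    exact hpos u hu hu0

theorem fullyStable_iff_composite_ssosc_general {n dd m : ℕ} {θ : Euc m → EReal}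
    {Φ : Euc n × Euc dd → Euc m} {φ₀ : Euc n × Euc dd → ℝ} {xb vb : Euc n} {wb : Euc dd}
    {lamb : Euc m} {c : ℝ} {P : PolySublinear (Euc m)}
    (hθ : HasPolyModel θ (Φ (xb, wb)) lamb c P)
    (hΦ : ContDiffAt ℝ 2 Φ (xb, wb)) (hφ₀ : ContDiffAt ℝ 2 φ₀ (xb, wb))
    (hnd : Disjoint (Spar θ (Φ (xb, wb)))
      (ContinuousLinearMap.adjoint (fderiv ℝ (fun x => Φ (x, wb)) xb)).ker)
    (hlamb : lamb ∈ subdiff θ (Φ (xb, wb)))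
    (hvb : vb = gradient (fun x => φ₀ (x, wb)) xb +
        ContinuousLinearMap.adjoint (fderiv ℝ (fun x => Φ (x, wb)) xb) lamb) :
    FullyStableSol (fun x w => ((φ₀ (x, w) : ℝ) : EReal) + θ (Φ (x, w))) xb wb vb ↔
    ∀ u : Euc n, u ≠ 0 →
      (sosd θ (Φ (xb, wb)) lamb ((fderiv ℝ (fun x => Φ (x, wb)) xb) u)).Nonempty →
      0 < ⟪u, hessXX (fun x w => φ₀ (x, w) + ⟪lamb, Φ (x, w)⟫) xb wb u⟫ := by
  obtain ⟨R, hRspar⟩ := exists_isRightInvOn_of_disjoint hnd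
  set A := fderiv ℝ (fun x => Φ (x, wb)) xb
  have hR : IsRightInvOn A R P.generators := fun b hb =>
    hRspar b (hθ.generators_subset_Spar hlamb hb)
  have h0 : 0 ∈ subdiff (P.comap A) 0 :=
    PolySublinear.zero_mem_subdiff_comap (hθ.zero_mem_subdiff hlamb)
  have hΦx : DifferentiableAt ℝ (fun x => Φ (x, wb)) xb :=
    (hΦ.comp xb (by fun_prop)).differentiableAt two_ne_zero
  have hφ₀x : DifferentiableAt ℝ (fun x => φ₀ (x, wb)) xb :=
    (hφ₀.comp xb (by fun_prop)).differentiableAt two_ne_zero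
  set f : Euc n × Euc dd → ℝ := fun q => (φ₀ q + ⟪lamb, Φ q⟫) + (c - ⟪lamb, Φ (xb, wb)⟫)
  have hf : ContDiffAt ℝ 2 f (xb, wb) :=
    (hφ₀.add (contDiffAt_const.inner ℝ hΦ)).add contDiffAt_const
  have hgrad : gradient (fun x => f (x, wb)) =
      gradient fun x => φ₀ (x, wb) + ⟪lamb, Φ (x, wb)⟫ := gradient_add_const _ _
  have hsplit : ∀ᶠ q in 𝓝 (xb, wb), (φ₀ (q.1, q.2) : EReal) + θ (Φ (q.1, q.2)) =
      f q + P.comap A (straighten Φ A R xb wb q) := by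
    filter_upwards [hΦ.continuousAt.eventually hθ.eventually_eq] with q hq
    rw [hq, PolySublinear.comap_straighten hR, ← add_assoc, ← EReal.coe_add]
    simp only [f, inner_sub_right]
    ring_nf
  rw [fullyStableSol_iff_forall_pos hsplit h0 hf (contDiffAt_straighten hΦ) straighten_self
    (fderiv_straighten hΦx.hasFDerivAt) ((congrFun hgrad xb).trans
      ((gradient_add_inner hφ₀x hΦx lamb).trans hvb.symm)), hgrad]
  exact forall_congr' fun u => by
    rw [hθ.sosd_nonempty_iff hlamb, PolySublinear.mem_span_zeroCone_comap hR, forall_comm]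
    rfl

/-- Second-order characterization of full stability in composite
optimization: under nondegeneracy, `xb` is a fully stable locally optimal solution of
`P(wb,vb)` iff the composite SSOSC holds:
`⟨u, ∇²ₓₓL(xb,wb,lamb) u⟩ > 0` for all `u ≠ 0` with `∇ₓΦ(xb,wb)u ∈ dom ∂²θ(zb,lamb)`. -/
theorem fullyStable_iff_composite_ssosc {n dd m l p : ℕ} (hl : 0 < l)
    (a : Fin l → Euc m) (α : Fin l → ℝ) (d : Fin p → Euc m) (β : Fin p → ℝ)
    (hdom : (cpwlDom d β).Nonempty)
    (Φ : Euc n × Euc dd → Euc m) (φ₀ : Euc n × Euc dd → ℝ) (xb : Euc n) (wb : Euc dd)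
    (hΦ : ContDiffAt ℝ 2 Φ (xb, wb)) (hφ₀ : ContDiffAt ℝ 2 φ₀ (xb, wb))
    (hzb : Φ (xb, wb) ∈ cpwlDom d β)
    (hnd : (Spar (cpwlFun a α d β) (Φ (xb, wb)) : Set (Euc m)) ∩
        {y | ContinuousLinearMap.adjoint (fderiv ℝ (fun x => Φ (x, wb)) xb) y = 0} = {0})
    (vb : Euc n) (lamb : Euc m)
    (hlamb : lamb ∈ subdiff (cpwlFun a α d β) (Φ (xb, wb)))
    (hvb : vb = gradient (fun x => φ₀ (x, wb)) xb +
        ContinuousLinearMap.adjoint (fderiv ℝ (fun x => Φ (x, wb)) xb) lamb) :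
    FullyStableSol (fun x w => ((φ₀ (x, w) : ℝ) : EReal) + cpwlFun a α d β (Φ (x, w)))
        xb wb vb ↔
    ∀ u : Euc n, u ≠ 0 →
      (sosd (cpwlFun a α d β) (Φ (xb, wb)) lamb
          ((fderiv ℝ (fun x => Φ (x, wb)) xb) u)).Nonempty →
      0 < ⟪u, hessXX (fun x w => φ₀ (x, w) + ⟪lamb, Φ (x, w)⟫) xb wb u⟫ := by
  refine fullyStable_iff_composite_ssosc_general (hasPolyModel_cpwlFun hl hzb lamb) hΦ hφ₀
    (Submodule.disjoint_def.2 fun y hy hker => ?_) hlamb hvb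
  exact hnd.subset ⟨hy, hker⟩
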